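/- The sequence of Euler-discretized joint state-path and parameter log-posteriors ℓ̃_i hypo-converges, on the space 𝒵 := W²_n × ℝ^q × ℝ^m equipped with the topology of the norm ‖·‖_{W²} on the first factor and the Euclidean norms on the others, to the energy log-posterior ℓ_e. -/

import Mathlib

open MeasureTheory Filter Set

/-- `ℝⁿ` with the Euclidean norm. -/
abbrev Eu (n : ℕ) := EuclideanSpace ℝ (Fin n)

/-- `ln` with values in `ℝ̄ = EReal` and `ln 0 := −∞`. -/
noncomputable def elog (r : ℝ) : EReal := if r ≤ 0 then ⊥ else ((Real.log r : ℝ) : EReal)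

/-- `(x, x')` is an element of `W²` on `[0, t_f]`: `x` is absolutely continuous with
a.e. derivative `x' ∈ L²`. -/
def IsW2 {n : ℕ} (tf : ℝ) (x x' : ℝ → Eu n) : Prop :=
  IntegrableOn x' (Icc 0 tf) ∧ IntegrableOn (fun t => ‖x' t‖ ^ 2) (Icc 0 tf) ∧
    ∀ t ∈ Icc (0:ℝ) tf, x t = x 0 + ∫ s in Ioc (0:ℝ) t, x' s

/-- The `W²` distance `‖x − y‖_{W²}` between `(x, x')` and `(y, y')`. -/
noncomputable def W2dist {n : ℕ} (tf : ℝ) (x x' y y' : ℝ → Eu n) : ℝ :=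
  Real.sqrt (‖x 0 - y 0‖ ^ 2 + ∫ s in Ioc (0:ℝ) tf, ‖x' s - y' s‖ ^ 2)

/-- `g ∈ PL(𝒫, ℝⁿ)`: `g` is continuous on `[0, t_f]` and affine on each subinterval
of the partition `t_0 < t_1 < ⋯ < t_N`. -/
def IsPL {n : ℕ} (tf : ℝ) (N : ℕ) (tP : ℕ → ℝ) (g : ℝ → Eu n) : Prop :=
  ContinuousOn g (Icc 0 tf) ∧
    ∀ k < N, ∃ a b : Eu n, ∀ s ∈ Icc (tP k) (tP (k + 1)), g s = a + s • b

/-- `zt` is the Euler-discretized clean-state path associated with `(xt, ζ, ϑ)`. -/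
def IsEulerPath {n q m : ℕ} (N : ℕ) (tP : ℕ → ℝ)
    (h : ℝ → Eu n → Eu q → Eu m → Eu q)
    (xt : ℝ → Eu n) (ζ : Eu q) (ϑ : Eu m) (zt : ℝ → Eu q) : Prop :=
  zt 0 = ζ ∧ ∀ k < N, ∀ s ∈ Ioc (tP k) (tP (k + 1)),
    zt s = zt (tP k) + (s - tP k) • h (tP k) (xt (tP k)) (zt (tP k)) ϑ

/-- The sum defining the quadratic (energy) term of the Euler-discretized
log-posterior. -/
noncomputable def eulerSum {n q m : ℕ} (N : ℕ) (tP : ℕ → ℝ)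
    (f : ℝ → Eu n → Eu q → Eu m → Eu n) (Ginv : Eu n → Eu n)
    (xt : ℝ → Eu n) (zt : ℝ → Eu q) (ϑ : Eu m) : ℝ :=
  ∑ k ∈ Finset.range N, (tP (k + 1) - tP k) *
    ‖Ginv ((tP (k + 1) - tP k)⁻¹ • (xt (tP (k + 1)) - xt (tP k))
      - f (tP k) (xt (tP k)) (zt (tP k)) ϑ)‖ ^ 2

/-- `v` is the value `ℓ̃(x̃, ζ, ϑ)` of the Euler-discretized joint state-path and
parameter log-posterior: `−∞` unless `x̃ ∈ PL(𝒫)` and `ϑ ∈ S`, in which case it is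
`ln ψ + ln π − ½ Σ δ_k |G⁻¹[Δx̃_k/δ_k − f]|²` with the Euler clean-state path. -/
def EulerVal {n q m : ℕ} (tf : ℝ) (N : ℕ) (tP : ℕ → ℝ) (S : Set (Eu m))
    (f : ℝ → Eu n → Eu q → Eu m → Eu n) (h : ℝ → Eu n → Eu q → Eu m → Eu q)
    (ψ : (ℝ → Eu n) → (ℝ → Eu q) → Eu m → ℝ) (pr : Eu n → Eu q → Eu m → ℝ)
    (Ginv : Eu n → Eu n)
    (xt : ℝ → Eu n) (ζ : Eu q) (ϑ : Eu m) (v : EReal) : Prop :=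
  (¬(IsPL tf N tP xt ∧ ϑ ∈ S) → v = ⊥) ∧
  ((IsPL tf N tP xt ∧ ϑ ∈ S) → ∃ zt : ℝ → Eu q, IsEulerPath N tP h xt ζ ϑ zt ∧
    v = elog (ψ xt zt ϑ) + elog (pr (xt 0) ζ ϑ)
      - ((((1:ℝ) / 2) * eulerSum N tP f Ginv xt zt ϑ : ℝ) : EReal))

/-- `v` is the value `ℓ_e(x, z₀, θ)` of the energy log-posterior: `−∞` unless
`θ ∈ S`, in which case it is `ln ψ + ln π − ½ ∫ |G⁻¹[ẋ − f]|² dt` with `z` the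
solution of the clean-state ODE. -/
def EnergyVal {n q m : ℕ} (tf : ℝ) (S : Set (Eu m))
    (f : ℝ → Eu n → Eu q → Eu m → Eu n) (h : ℝ → Eu n → Eu q → Eu m → Eu q)
    (ψ : (ℝ → Eu n) → (ℝ → Eu q) → Eu m → ℝ) (pr : Eu n → Eu q → Eu m → ℝ)
    (Ginv : Eu n → Eu n)
    (x x' : ℝ → Eu n) (z0 : Eu q) (θ : Eu m) (v : EReal) : Prop :=
  (θ ∉ S → v = ⊥) ∧
  (θ ∈ S → ∃ z : ℝ → Eu q, ContinuousOn z (Icc 0 tf) ∧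
    (∀ t ∈ Icc (0:ℝ) tf, z t = z0 + ∫ s in Ioc (0:ℝ) t, h s (x s) (z s) θ) ∧
    v = elog (ψ x z θ) + elog (pr (x 0) z0 θ)
      - ((((1:ℝ) / 2) * ∫ t in Ioc (0:ℝ) tf,
          ‖Ginv (x' t - f t (x t) (z t) θ)‖ ^ 2 : ℝ) : EReal))

/-!
Where it is not `-∞` by convention, the discretized log-posterior is continuous along
`W²`-convergent data, and both halves of hypo-convergence follow from this.

A partition enters only through the left endpoint of the cell containing `t`. Convergence in `W²`
implies uniform convergence, and the Euler path `z̃` then solves an integral equation whose data are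
evaluated at left endpoints and converge uniformly to those of the clean-state equation, so that
`z̃ → z` uniformly by a Gronwall argument. The Euler sum is the squared `L²` norm of the cell
averages of the derivative of `x̃` minus a uniformly convergent drift. Averaging over cells is an
`L²` contraction by Jensen's inequality and converges to the identity on continuous functions, hence
strongly on `L²`, and the sums converge to the energy. The recovery sequence consists of the
piecewise linear interpolants of `x`, whose derivatives are the cell averages of the derivative
of `x`.
-/

open scoped Topology ENNReal NNReal

section Partition

/-- The nodes `τ 0 < τ 1 < ⋯ < τ N` form a partition of `[a, b]`. The values `τ k` with `N < k`
are irrelevant. -/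
structure IsPartition (a b : ℝ) (N : ℕ) (τ : ℕ → ℝ) : Prop where
  zero_eq : τ 0 = a
  last_eq : τ N = b
  lt_succ : ∀ k < N, τ k < τ (k + 1)

/-- The largest step size of the partition `τ 0 < ⋯ < τ N`. -/
noncomputable def mesh (N : ℕ) (τ : ℕ → ℝ) : ℝ := ⨆ k : Fin N, (τ (k.1 + 1) - τ k.1)

open Classical in
/-- The index `k` of the cell `(τ k, τ (k + 1)]` that contains `t`. Outside all cells the value is
junk, but it stays at most `N - 1`. -/
noncomputable def cellIndex (N : ℕ) (τ : ℕ → ℝ) (t : ℝ) : ℕ :=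
  Nat.findGreatest (fun k => τ k < t) (N - 1)

/-- The left endpoint of the cell that contains `t`. The Euler scheme evaluates its data there. -/
noncomputable def leftNode (N : ℕ) (τ : ℕ → ℝ) (t : ℝ) : ℝ := τ (cellIndex N τ t)

variable {a b : ℝ} {N : ℕ} {τ : ℕ → ℝ} {k : ℕ} {t : ℝ}

namespace IsPartition

lemma node_le_node (P : IsPartition a b N τ) {j : ℕ} (hjk : j ≤ k) (hk : k ≤ N) : τ j ≤ τ k := by
  induction k, hjk using Nat.le_induction with
  | base => exact le_rfl
  | succ k _ ih => exact (ih (by omega)).trans (P.lt_succ k (by omega)).le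

lemma node_mem_Icc (P : IsPartition a b N τ) (hk : k ≤ N) : τ k ∈ Icc a b :=
  ⟨P.zero_eq ▸ P.node_le_node (Nat.zero_le k) hk, P.last_eq ▸ P.node_le_node hk le_rfl⟩

lemma left_le_right (P : IsPartition a b N τ) : a ≤ b := P.last_eq ▸ (P.node_mem_Icc le_rfl).1

lemma cell_subset (P : IsPartition a b N τ) (hk : k < N) : Ioc (τ k) (τ (k + 1)) ⊆ Ioc a b :=
  Ioc_subset_Ioc (P.node_mem_Icc hk.le).1 (P.node_mem_Icc (Nat.succ_le_of_lt hk)).2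

lemma sub_le_mesh (hk : k < N) : τ (k + 1) - τ k ≤ mesh N τ :=
  le_ciSup (f := fun k : Fin N => τ (k.1 + 1) - τ k.1) (finite_range _).bddAbove ⟨k, hk⟩

lemma exists_mem_cell (P : IsPartition a b N τ) (ht : t ∈ Ioc a b) :
    ∃ k < N, t ∈ Ioc (τ k) (τ (k + 1)) := by
  suffices ∀ n ≤ N, t ≤ τ n → ∃ k < N, t ∈ Ioc (τ k) (τ (k + 1)) from
    this N le_rfl (P.last_eq ▸ ht.2)
  intro n hn htn
  induction n with
  | zero => exact absurd ht.1 (P.zero_eq ▸ htn).not_gt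
  | succ n ih =>
    by_cases h : t ≤ τ n
    · exact ih (by omega) h
    · exact ⟨n, hn, not_le.1 h, htn⟩

lemma induction_on_cells (P : IsPartition a b N τ) {p : ℝ → Prop} (ha : p a)
    (hstep : ∀ k < N, p (τ k) → ∀ t ∈ Ioc (τ k) (τ (k + 1)), p t) : ∀ t ∈ Icc a b, p t := by
  have hnode : ∀ k ≤ N, p (τ k) := by
    intro k hk
    induction k with
    | zero => rwa [P.zero_eq]
    | succ k ih => exact hstep k hk (ih (by omega)) _ (right_mem_Ioc.2 (P.lt_succ k hk))
  rintro t ⟨hat, htb⟩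
  obtain rfl | hlt := hat.eq_or_lt
  · exact ha
  · obtain ⟨k, hk, htk⟩ := P.exists_mem_cell ⟨hlt, htb⟩
    exact hstep k hk (hnode k hk.le) t htk

lemma cellIndex_eq (P : IsPartition a b N τ) (hk : k < N) (ht : t ∈ Ioc (τ k) (τ (k + 1))) :
    cellIndex N τ t = k := by
  classical
  rw [cellIndex, Nat.findGreatest_eq_iff]
  refine ⟨by omega, fun _ => ht.1, fun j hj hjN => not_lt.2 ?_⟩
  exact ht.2.trans (P.node_le_node hj (by omega))

lemma cellIndex_lt (P : IsPartition a b N τ) (ht : t ∈ Ioc a b) : cellIndex N τ t < N := by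
  obtain ⟨k, hk, htk⟩ := P.exists_mem_cell ht
  rwa [P.cellIndex_eq hk htk]

lemma mem_cell_cellIndex (P : IsPartition a b N τ) (ht : t ∈ Ioc a b) :
    t ∈ Ioc (τ (cellIndex N τ t)) (τ (cellIndex N τ t + 1)) := by
  obtain ⟨k, hk, htk⟩ := P.exists_mem_cell ht
  rwa [P.cellIndex_eq hk htk]

lemma leftNode_eq (P : IsPartition a b N τ) (hk : k < N) (ht : t ∈ Ioc (τ k) (τ (k + 1))) :
    leftNode N τ t = τ k := by
  rw [leftNode, P.cellIndex_eq hk ht]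

lemma leftNode_mem_Icc (P : IsPartition a b N τ) (ht : t ∈ Ioc a b) : leftNode N τ t ∈ Icc a b :=
  P.node_mem_Icc (P.cellIndex_lt ht).le

lemma dist_le_mesh (P : IsPartition a b N τ) (ht : t ∈ Ioc a b) {s : ℝ}
    (hs : s ∈ Icc (leftNode N τ t) (τ (cellIndex N τ t + 1))) : dist s t ≤ mesh N τ :=
  (Real.dist_le_of_mem_Icc hs (Ioc_subset_Icc_self (P.mem_cell_cellIndex ht))).trans
    (sub_le_mesh (P.cellIndex_lt ht))

lemma restrict_Ioc_eq_sum (P : IsPartition a b N τ) (μ : Measure ℝ) :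
    μ.restrict (Ioc a b) = ∑ k ∈ Finset.range N, μ.restrict (Ioc (τ k) (τ (k + 1))) := by
  suffices ∀ n ≤ N, μ.restrict (Ioc a (τ n)) =
      ∑ k ∈ Finset.range n, μ.restrict (Ioc (τ k) (τ (k + 1))) from
    P.last_eq ▸ this N le_rfl
  intro n hn
  induction n with
  | zero => simp [P.zero_eq]
  | succ n ih =>
    rw [Finset.sum_range_succ, ← ih (by omega), ← Measure.restrict_union
      (Ioc_disjoint_Ioc_of_le le_rfl) measurableSet_Ioc, Ioc_union_Ioc_eq_Ioc
      (P.node_mem_Icc (by omega)).1 (P.lt_succ n hn).le]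

end IsPartition

end Partition

section StepFunction

variable {E : Type*} [NormedAddCommGroup E] {a b : ℝ} {N : ℕ} {τ : ℕ → ℝ}

lemma measurable_cellIndex (N : ℕ) (τ : ℕ → ℝ) : Measurable (cellIndex N τ) := by
  classical
  exact measurable_findGreatest fun k _ => measurableSet_lt measurable_const measurable_id

lemma memLp_comp_cellIndex (N : ℕ) (τ : ℕ → ℝ) (F : ℕ → E) (p : ℝ≥0∞) (μ : Measure ℝ)
    [IsFiniteMeasure μ] : MemLp (fun t => F (cellIndex N τ t)) p μ := by
  have hF : StronglyMeasurable fun t => F (cellIndex N τ t) :=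
    (StronglyMeasurable.of_discrete (f := F)).comp_measurable (measurable_cellIndex N τ)
  refine MemLp.of_bound hF.aestronglyMeasurable (∑ k ∈ Finset.range (N + 1), ‖F k‖)
    (ae_of_all _ fun t => ?_)
  have hle : cellIndex N τ t ≤ N - 1 := Nat.findGreatest_le _
  exact Finset.single_le_sum (f := fun k => ‖F k‖) (fun _ _ => norm_nonneg _)
    (Finset.mem_range.2 (by omega))

namespace IsPartition

variable [NormedSpace ℝ E] [CompleteSpace E]

lemma integral_comp_cellIndex_of_mem_cell (P : IsPartition a b N τ) (F : ℕ → E) {k : ℕ}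
    (hk : k < N) {t : ℝ} (ht : t ∈ Icc (τ k) (τ (k + 1))) :
    ∫ s in Ioc (τ k) t, F (cellIndex N τ s) = (t - τ k) • F k :=
  calc ∫ s in Ioc (τ k) t, F (cellIndex N τ s)
      = ∫ _ in Ioc (τ k) t, F k := setIntegral_congr_fun measurableSet_Ioc fun s hs => by
        rw [P.cellIndex_eq hk ⟨hs.1, hs.2.trans ht.2⟩]
    _ = (t - τ k) • F k := by rw [setIntegral_const, Real.volume_real_Ioc_of_le ht.1]

lemma integral_comp_cellIndex (P : IsPartition a b N τ) (F : ℕ → E) :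
    ∫ t in Ioc a b, F (cellIndex N τ t) = ∑ k ∈ Finset.range N, (τ (k + 1) - τ k) • F k := by
  rw [P.restrict_Ioc_eq_sum, integral_finsetSum_measure fun k _ =>
    (memLp_comp_cellIndex N τ F 1 _).integrable le_rfl]
  refine Finset.sum_congr rfl fun k hk => ?_
  have hk : k < N := Finset.mem_range.1 hk
  exact P.integral_comp_cellIndex_of_mem_cell F hk (right_mem_Icc.2 (P.lt_succ k hk).le)

end IsPartition

end StepFunction

section Averaging

variable {E : Type*} [NormedAddCommGroup E] [NormedSpace ℝ E]

lemma enorm_average_rpow_le_laverage {α : Type*} {_ : MeasurableSpace α} {μ : Measure α}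
    [IsFiniteMeasure μ] [NeZero μ] {f : α → E} (hf : AEStronglyMeasurable f μ) {p : ℝ}
    (hp : 1 ≤ p) : ‖⨍ x, f x ∂μ‖ₑ ^ p ≤ ⨍⁻ x, ‖f x‖ₑ ^ p ∂μ := by
  have hp' : 1 ≤ ENNReal.ofReal p := by simpa using hp
  have hp0 : 0 < p := zero_lt_one.trans_le hp
  have hfν := hf.smul_measure (μ univ)⁻¹
  rw [average, laverage]
  calc ‖∫ x, f x ∂(μ univ)⁻¹ • μ‖ₑ ^ p
      ≤ eLpNorm f 1 ((μ univ)⁻¹ • μ) ^ p := by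
        rw [eLpNorm_one_eq_lintegral_enorm]
        gcongr
        exact enorm_integral_le_lintegral_enorm f
    _ ≤ eLpNorm f (ENNReal.ofReal p) ((μ univ)⁻¹ • μ) ^ p := by
        gcongr
        exact eLpNorm_le_eLpNorm_of_exponent_le hp' hfν
    _ = ∫⁻ x, ‖f x‖ₑ ^ p ∂(μ univ)⁻¹ • μ := by
        rw [eLpNorm_eq_lintegral_rpow_enorm_toReal (by simpa using hp0) ENNReal.ofReal_ne_top,
          ENNReal.toReal_ofReal hp0.le, ← ENNReal.rpow_mul, one_div, inv_mul_cancel₀ hp0.ne',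
          ENNReal.rpow_one]

lemma dist_setAverage_le [CompleteSpace E] {α : Type*} {_ : MeasurableSpace α} {μ : Measure α}
    {s : Set α} (hs : MeasurableSet s) (hs0 : μ s ≠ 0) (hsfin : μ s ≠ ∞) {f : α → E}
    (hf : IntegrableOn f s μ) {c : E} {r : ℝ} (hr : ∀ x ∈ s, dist (f x) c ≤ r) :
    dist (⨍ x in s, f x ∂μ) c ≤ r :=
  (convex_closedBall c r).set_average_mem Metric.isClosed_closedBall hs0 hsfin
    ((ae_restrict_mem hs).mono hr) hf

/-- The step function whose value on each cell of the partition is the average of `y` over that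
cell: the derivative of the piecewise linear interpolant of any primitive of `y`. -/
noncomputable def cellAverage (N : ℕ) (τ : ℕ → ℝ) (y : ℝ → E) (t : ℝ) : E :=
  ⨍ s in Ioc (τ (cellIndex N τ t)) (τ (cellIndex N τ t + 1)), y s

lemma memLp_cellAverage (N : ℕ) (τ : ℕ → ℝ) (y : ℝ → E) (p : ℝ≥0∞) (μ : Measure ℝ)
    [IsFiniteMeasure μ] : MemLp (cellAverage N τ y) p μ :=
  memLp_comp_cellIndex N τ (fun k => ⨍ s in Ioc (τ k) (τ (k + 1)), y s) p μ

variable {a b : ℝ} {p : ℝ≥0∞}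

namespace IsPartition

variable {N : ℕ} {τ : ℕ → ℝ}

lemma cellAverage_sub (P : IsPartition a b N τ) {y g : ℝ → E} (hy : IntegrableOn y (Ioc a b))
    (hg : IntegrableOn g (Ioc a b)) {t : ℝ} (ht : t ∈ Ioc a b) :
    cellAverage N τ (y - g) t = cellAverage N τ y t - cellAverage N τ g t := by
  have hsub := P.cell_subset (P.cellIndex_lt ht)
  simp only [cellAverage, setAverage_eq, Pi.sub_apply]
  rw [integral_sub (hy.mono_set hsub) (hg.mono_set hsub), smul_sub]

lemma eLpNorm_cellAverage_le (P : IsPartition a b N τ) (hp : 1 ≤ p) (hp' : p ≠ ∞) {y : ℝ → E}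
    (hy : AEStronglyMeasurable y (volume.restrict (Ioc a b))) :
    eLpNorm (cellAverage N τ y) p (volume.restrict (Ioc a b)) ≤
      eLpNorm y p (volume.restrict (Ioc a b)) := by
  have hp0 : p ≠ 0 := (zero_lt_one.trans_le hp).ne'
  have hp1 : 1 ≤ p.toReal := by simpa using ENNReal.toReal_mono hp' hp
  simp only [eLpNorm_eq_lintegral_rpow_enorm_toReal hp0 hp']
  gcongr ?_ ^ _
  rw [P.restrict_Ioc_eq_sum, lintegral_finsetSum_measure, lintegral_finsetSum_measure]
  refine Finset.sum_le_sum fun k hk => ?_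
  have hk : k < N := Finset.mem_range.1 hk
  set μ := volume.restrict (Ioc (τ k) (τ (k + 1))) with hμ
  have : NeZero μ := ⟨by simp [hμ, P.lt_succ k hk]⟩
  have hyk := hy.mono_measure (Measure.restrict_mono_set volume (P.cell_subset hk))
  calc ∫⁻ t, ‖cellAverage N τ y t‖ₑ ^ p.toReal ∂μ
      = ∫⁻ _, ‖⨍ s, y s ∂μ‖ₑ ^ p.toReal ∂μ :=
        setLIntegral_congr_fun measurableSet_Ioc fun t ht => by
          rw [cellAverage, P.cellIndex_eq hk ht]
    _ = μ univ * ‖⨍ s, y s ∂μ‖ₑ ^ p.toReal := by rw [lintegral_const, mul_comm]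
    _ ≤ μ univ * ⨍⁻ s, ‖y s‖ₑ ^ p.toReal ∂μ := by
        gcongr
        exact enorm_average_rpow_le_laverage hyk hp1
    _ = ∫⁻ t, ‖y t‖ₑ ^ p.toReal ∂μ := measure_mul_laverage μ _

end IsPartition

lemma tendsto_eLpNorm_sub_of_tendstoUniformlyOn {α ι F : Type*} [NormedAddCommGroup F]
    {_ : MeasurableSpace α} {μ : Measure α} {s : Set α} (hs : MeasurableSet s) (hμs : μ s ≠ ∞)
    {l : Filter ι} {g : ι → α → F} {f : α → F} (hg : TendstoUniformlyOn g f l s) (p : ℝ≥0∞) :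
    Tendsto (fun i => eLpNorm (g i - f) p (μ.restrict s)) l (𝓝 0) := by
  have hfin : μ s ^ p.toReal⁻¹ ≠ ∞ := ENNReal.rpow_ne_top_of_nonneg (by positivity) hμs
  have hbound : Tendsto (fun r => μ s ^ p.toReal⁻¹ * ENNReal.ofReal r) (𝓝[>] 0) (𝓝 0) := by
    have hofReal : Tendsto ENNReal.ofReal (𝓝[>] 0) (𝓝 0) :=
      ENNReal.ofReal_zero ▸ ENNReal.continuous_ofReal.continuousWithinAt.tendsto
    simpa only [mul_zero] using ENNReal.Tendsto.const_mul hofReal (Or.inr hfin)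
  refine ENNReal.tendsto_nhds_zero.2 fun ε hε => ?_
  obtain ⟨r, hr, hr0⟩ := ((ENNReal.tendsto_nhds_zero.1 hbound ε hε).and
    self_mem_nhdsWithin).exists
  filter_upwards [Metric.tendstoUniformlyOn_iff.1 hg r hr0] with i hi
  have hle : ∀ᵐ x ∂μ.restrict s, ‖(g i - f) x‖ ≤ r := by
    filter_upwards [ae_restrict_mem hs] with x hx
    rw [Pi.sub_apply, ← dist_eq_norm, dist_comm]
    exact (hi x hx).le
  refine (eLpNorm_le_of_ae_bound hle).trans ?_
  rwa [Measure.restrict_apply_univ]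

variable {ι : Type*} {l : Filter ι} {N : ι → ℕ} {τ : ι → ℕ → ℝ}

lemma tendstoUniformlyOn_cellAverage [CompleteSpace E]
    (hP : ∀ i, IsPartition a b (N i) (τ i)) (hmesh : Tendsto (fun i => mesh (N i) (τ i)) l (𝓝 0))
    {y : ℝ → E} (hy : ContinuousOn y (Icc a b)) :
    TendstoUniformlyOn (fun i => cellAverage (N i) (τ i) y) y l (Ioc a b) := by
  rw [Metric.tendstoUniformlyOn_iff]
  intro ε hε
  obtain ⟨δ, hδ, hyδ⟩ := Metric.uniformContinuousOn_iff.1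
    (isCompact_Icc.uniformContinuousOn_of_continuous hy) (ε / 2) (half_pos hε)
  filter_upwards [hmesh.eventually_lt_const hδ] with i hi t ht
  have hk := (hP i).cellIndex_lt ht
  have hlt := (hP i).lt_succ _ hk
  have hsub := (hP i).cell_subset hk
  rw [dist_comm]
  refine lt_of_le_of_lt ?_ (half_lt_self hε)
  refine dist_setAverage_le measurableSet_Ioc (by simp [hlt]) (by simp)
    ((hy.integrableOn_Icc.mono_set Ioc_subset_Icc_self).mono_set hsub) fun s hs => ?_
  exact (hyδ s (Ioc_subset_Icc_self (hsub hs)) t (Ioc_subset_Icc_self ht)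
    (((hP i).dist_le_mesh ht (Ioc_subset_Icc_self hs)).trans_lt hi)).le

lemma tendsto_eLpNorm_cellAverage_sub [CompleteSpace E]
    (hP : ∀ i, IsPartition a b (N i) (τ i)) (hmesh : Tendsto (fun i => mesh (N i) (τ i)) l (𝓝 0))
    (hp : 1 ≤ p) (hp' : p ≠ ∞) {y : ℝ → E} (hy : MemLp y p (volume.restrict (Ioc a b))) :
    Tendsto (fun i => eLpNorm (cellAverage (N i) (τ i) y - y) p (volume.restrict (Ioc a b)))
      l (𝓝 0) := by
  set μ := volume.restrict (Ioc a b)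
  refine ENNReal.tendsto_nhds_zero.2 fun ε hε => ?_
  have hε3 : ε / 3 ≠ 0 := (ENNReal.div_pos hε.ne' (by simp)).ne'
  obtain ⟨g, -, hyg, hgc, hg⟩ := hy.exists_hasCompactSupport_eLpNorm_sub_le hp' hε3
  have hunif := tendsto_eLpNorm_sub_of_tendstoUniformlyOn (μ := volume) measurableSet_Ioc (by simp)
    (tendstoUniformlyOn_cellAverage hP hmesh hgc.continuousOn) p
  filter_upwards [ENNReal.tendsto_nhds_zero.1 hunif (ε / 3) hε3.bot_lt] with i hi
  set A := cellAverage (E := E) (N i) (τ i) with hA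
  have hmeas (w : ℝ → E) : AEStronglyMeasurable (A w) μ := (memLp_cellAverage _ _ w p μ).1
  have hsplit : A y - y =ᵐ[μ] A (y - g) + (A g - g) - (y - g) := by
    filter_upwards [ae_restrict_mem measurableSet_Ioc] with t ht
    simp only [hA, Pi.sub_apply, Pi.add_apply,
      (hP i).cellAverage_sub (hy.integrable hp) (hg.integrable hp) ht]
    abel
  calc eLpNorm (A y - y) p μ
      = eLpNorm (A (y - g) + (A g - g) - (y - g)) p μ := eLpNorm_congr_ae hsplit
    _ ≤ eLpNorm (A (y - g)) p μ + eLpNorm (A g - g) p μ + eLpNorm (y - g) p μ :=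
        (eLpNorm_sub_le ((hmeas _).add ((hmeas g).sub hg.1)) (hy.1.sub hg.1) hp).trans
          (add_le_add_left (eLpNorm_add_le (hmeas _) ((hmeas g).sub hg.1) hp) _)
    _ ≤ ε / 3 + ε / 3 + ε / 3 :=
        add_le_add_three (((hP i).eLpNorm_cellAverage_le hp hp' (hy.1.sub hg.1)).trans hyg) hi hyg
    _ = ε := ENNReal.add_thirds ε

lemma tendsto_eLpNorm_cellAverage_sub_of_tendsto [CompleteSpace E]
    (hP : ∀ i, IsPartition a b (N i) (τ i)) (hmesh : Tendsto (fun i => mesh (N i) (τ i)) l (𝓝 0))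
    (hp : 1 ≤ p) (hp' : p ≠ ∞) {w : ι → ℝ → E} {y : ℝ → E}
    (hw : ∀ i, MemLp (w i) p (volume.restrict (Ioc a b)))
    (hy : MemLp y p (volume.restrict (Ioc a b)))
    (hwy : Tendsto (fun i => eLpNorm (w i - y) p (volume.restrict (Ioc a b))) l (𝓝 0)) :
    Tendsto (fun i => eLpNorm (cellAverage (N i) (τ i) (w i) - y) p (volume.restrict (Ioc a b)))
      l (𝓝 0) := by
  set μ := volume.restrict (Ioc a b)
  have hsum : Tendsto (fun i => eLpNorm (w i - y) p μ +
      eLpNorm (cellAverage (N i) (τ i) y - y) p μ) l (𝓝 0) := by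
    simpa only [add_zero] using hwy.add (tendsto_eLpNorm_cellAverage_sub hP hmesh hp hp' hy)
  refine tendsto_of_tendsto_of_tendsto_of_le_of_le tendsto_const_nhds hsum
    (fun _ => zero_le) fun i => ?_
  set A := cellAverage (E := E) (N i) (τ i) with hA
  have hmeas (w : ℝ → E) : AEStronglyMeasurable (A w) μ := (memLp_cellAverage _ _ w p μ).1
  have hsplit : A (w i) - y =ᵐ[μ] A (w i - y) + (A y - y) := by
    filter_upwards [ae_restrict_mem measurableSet_Ioc] with t ht
    simp only [hA, Pi.sub_apply, Pi.add_apply,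
      (hP i).cellAverage_sub ((hw i).integrable hp) (hy.integrable hp) ht]
    abel
  calc eLpNorm (A (w i) - y) p μ
      = eLpNorm (A (w i - y) + (A y - y)) p μ := eLpNorm_congr_ae hsplit
    _ ≤ eLpNorm (A (w i - y)) p μ + eLpNorm (A y - y) p μ :=
        eLpNorm_add_le (hmeas _) ((hmeas y).sub hy.1) hp
    _ ≤ eLpNorm (w i - y) p μ + eLpNorm (A y - y) p μ := by
        gcongr
        exact (hP i).eLpNorm_cellAverage_le hp hp' ((hw i).1.sub hy.1)

end Averaging

section Primitive

variable {E : Type*} [NormedAddCommGroup E] [NormedSpace ℝ E]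

/-- `w` is absolutely continuous on `[a, b]` with almost everywhere derivative `W`, in integral
form. -/
structure IsPrimitiveOn (a b : ℝ) (w W : ℝ → E) : Prop where
  integrableOn : IntegrableOn W (Ioc a b)
  eq_add_integral : ∀ t ∈ Icc a b, w t = w a + ∫ s in Ioc a t, W s

variable {a b s t : ℝ} {w W v V : ℝ → E}

namespace IsPrimitiveOn

lemma continuousOn (hw : IsPrimitiveOn a b w W) : ContinuousOn w (Icc a b) :=
  (continuousOn_const.add (intervalIntegral.continuousOn_primitive
    ((integrableOn_Icc_iff_integrableOn_Ioc).2 hw.integrableOn))).congr hw.eq_add_integral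

lemma sub_eq_integral (hw : IsPrimitiveOn a b w W) (has : a ≤ s) (hst : s ≤ t) (htb : t ≤ b) :
    w t - w s = ∫ r in Ioc s t, W r := by
  rw [hw.eq_add_integral t ⟨has.trans hst, htb⟩, hw.eq_add_integral s ⟨has, hst.trans htb⟩,
    ← Ioc_union_Ioc_eq_Ioc has hst, setIntegral_union (Ioc_disjoint_Ioc_of_le le_rfl)
      measurableSet_Ioc (hw.integrableOn.mono_set (Ioc_subset_Ioc_right (hst.trans htb)))
      (hw.integrableOn.mono_set (Ioc_subset_Ioc has htb))]
  abel

lemma slope_eq_setAverage (hw : IsPrimitiveOn a b w W) (has : a ≤ s) (hst : s ≤ t) (htb : t ≤ b) :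
    slope w s t = ⨍ r in Ioc s t, W r := by
  rw [slope, vsub_eq_sub, hw.sub_eq_integral has hst htb, setAverage_eq,
    Real.volume_real_Ioc_of_le hst]

lemma sub (hw : IsPrimitiveOn a b w W) (hv : IsPrimitiveOn a b v V) :
    IsPrimitiveOn a b (w - v) (W - V) where
  integrableOn := hw.integrableOn.sub hv.integrableOn
  eq_add_integral t ht := by
    have hsub : Ioc a t ⊆ Ioc a b := Ioc_subset_Ioc_right ht.2
    simp only [Pi.sub_apply]
    rw [integral_sub (hw.integrableOn.mono_set hsub) (hv.integrableOn.mono_set hsub),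
      hw.eq_add_integral t ht, hv.eq_add_integral t ht]
    abel

lemma norm_le_add_integral_norm (hw : IsPrimitiveOn a b w W) (ht : t ∈ Icc a b) :
    ‖w t‖ ≤ ‖w a‖ + ∫ s in Ioc a b, ‖W s‖ := by
  rw [hw.eq_add_integral t ht]
  refine (norm_add_le _ _).trans (add_le_add_right ((norm_integral_le_integral_norm _).trans ?_) _)
  exact setIntegral_mono_set hw.integrableOn.norm (ae_of_all _ fun _ => norm_nonneg _)
    (Ioc_subset_Ioc_right ht.2).eventuallyLE

end IsPrimitiveOn

lemma isPrimitiveOn_add_integral (hW : IntegrableOn W (Ioc a b)) (c : E) :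
    IsPrimitiveOn a b (fun t => c + ∫ s in Ioc a t, W s) W :=
  ⟨hW, fun t _ => by simp⟩

lemma isPrimitiveOn_of_eq_add_integral (hW : IntegrableOn W (Ioc a b)) (hab : a ≤ b) {c : E}
    (hw : ∀ t ∈ Icc a b, w t = c + ∫ s in Ioc a t, W s) : w a = c ∧ IsPrimitiveOn a b w W := by
  have hwa : w a = c := by simpa using hw a (left_mem_Icc.2 hab)
  exact ⟨hwa, hW, hwa ▸ hw⟩

lemma IsPartition.isPrimitiveOn_of_affine [CompleteSpace E] {N : ℕ} {τ : ℕ → ℝ}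
    (P : IsPartition a b N τ) {F : ℕ → E}
    (hw : ∀ k < N, ∀ t ∈ Ioc (τ k) (τ (k + 1)), w t = w (τ k) + (t - τ k) • F k) :
    IsPrimitiveOn a b w fun t => F (cellIndex N τ t) := by
  have hF : IntegrableOn (fun t => F (cellIndex N τ t)) (Ioc a b) :=
    (memLp_comp_cellIndex N τ F 1 _).integrable le_rfl
  refine ⟨hF, P.induction_on_cells (by simp) fun k hk hτk t ht => ?_⟩
  have hadd := (isPrimitiveOn_add_integral hF (w a)).sub_eq_integral
    (P.node_mem_Icc hk.le).1 ht.1.le (P.cell_subset hk ht).2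
  rw [hw k hk t ht, ← P.integral_comp_cellIndex_of_mem_cell F hk (Ioc_subset_Icc_self ht), ← hadd,
    hτk]
  abel

end Primitive

section Gronwall

lemma one_add_mul_gronwall_le {A L η r δ : ℝ} (hA : 0 ≤ A) (hL : 0 ≤ L) (hη : 0 ≤ η)
    (hr : 0 ≤ r) (hδ : 0 ≤ δ) :
    (1 + L * δ) * ((A + η * r) * Real.exp (L * r)) + η * δ ≤
      (A + η * (r + δ)) * Real.exp (L * (r + δ)) := by
  have hexp : 1 ≤ Real.exp (L * (r + δ)) := Real.one_le_exp (by positivity)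
  calc (1 + L * δ) * ((A + η * r) * Real.exp (L * r)) + η * δ
      ≤ Real.exp (L * δ) * ((A + η * r) * Real.exp (L * r)) +
          η * δ * Real.exp (L * (r + δ)) := by
        refine add_le_add ?_ (le_mul_of_one_le_right (by positivity) hexp)
        gcongr
        linarith [Real.add_one_le_exp (L * δ)]
    _ = (A + η * (r + δ)) * Real.exp (L * (r + δ)) := by
        rw [mul_add L, Real.exp_add]
        ring

variable {E : Type*} [NormedAddCommGroup E] [NormedSpace ℝ E] {a b : ℝ}

lemma IsPrimitiveOn.norm_le_gronwall_of_leftNode {N : ℕ} {τ : ℕ → ℝ} (P : IsPartition a b N τ)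
    {w W : ℝ → E} (hw : IsPrimitiveOn a b w W) {L η : ℝ} (hL : 0 ≤ L) (hη : 0 ≤ η)
    (hW : ∀ t ∈ Ioc a b, ‖W t‖ ≤ L * ‖w (leftNode N τ t)‖ + η) :
    ∀ t ∈ Icc a b, ‖w t‖ ≤ (‖w a‖ + η * (t - a)) * Real.exp (L * (t - a)) := by
  refine P.induction_on_cells (by simp) fun k hk hτk t ht => ?_
  have hak : a ≤ τ k := (P.node_mem_Icc hk.le).1
  have hcell : ‖w t - w (τ k)‖ ≤ (L * ‖w (τ k)‖ + η) * (t - τ k) := by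
    rw [hw.sub_eq_integral hak ht.1.le (P.cell_subset hk ht).2,
      ← Real.volume_real_Ioc_of_le ht.1.le]
    refine norm_setIntegral_le_of_norm_le_const (by simp) fun s hs => ?_
    have hs : s ∈ Ioc (τ k) (τ (k + 1)) := ⟨hs.1, hs.2.trans ht.2⟩
    exact P.leftNode_eq hk hs ▸ hW s (P.cell_subset hk hs)
  have hδ : 0 ≤ t - τ k := sub_nonneg.2 ht.1.le
  calc ‖w t‖ ≤ ‖w (τ k)‖ + ‖w t - w (τ k)‖ := norm_le_insert' _ _
    _ ≤ (1 + L * (t - τ k)) * ‖w (τ k)‖ + η * (t - τ k) := by linarith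
    _ ≤ (1 + L * (t - τ k)) * ((‖w a‖ + η * (τ k - a)) * Real.exp (L * (τ k - a))) +
          η * (t - τ k) := by gcongr
    _ ≤ (‖w a‖ + η * (t - a)) * Real.exp (L * (t - a)) := by
        convert one_add_mul_gronwall_le (norm_nonneg (w a)) hL hη (sub_nonneg.2 hak) hδ using 4 <;>
          ring

end Gronwall

section UniformConvergence

lemma tendstoUniformlyOn_prodMk {α β γ ι : Type*} [UniformSpace β] [UniformSpace γ]
    {l : Filter ι} {s : Set α} {F : ι → α → β} {f : α → β} {G : ι → α → γ} {g : α → γ}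
    (hF : TendstoUniformlyOn F f l s) (hG : TendstoUniformlyOn G g l s) :
    TendstoUniformlyOn (fun i x => (F i x, G i x)) (fun x => (f x, g x)) l s :=
  fun u hu => tendsto_diag.eventually (hF.prodMk hG u hu)

lemma tendstoUniformlyOn_const_family {α β ι : Type*} [UniformSpace β] (l : Filter ι) (s : Set α)
    (f : α → β) :
    TendstoUniformlyOn (fun _ : ι => f) f l s :=
  fun _ hu => Eventually.of_forall fun _ _ _ => refl_mem_uniformity hu

lemma tendstoUniformlyOn_comp₄ {α T X Z Θ V ι : Type*} [UniformSpace T] [UniformSpace X]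
    [UniformSpace Z] [UniformSpace Θ] [UniformSpace V] {I : Set T} {S : Set Θ}
    {f : T → X → Z → Θ → V} (hf : UniformContinuousOn ↿f (I ×ˢ univ ×ˢ univ ×ˢ S))
    {l : Filter ι} {s : Set α} {t : ι → α → T} {t₀ : α → T} (ht : TendstoUniformlyOn t t₀ l s)
    (htI : ∀ i, MapsTo (t i) s I) (ht₀I : MapsTo t₀ s I)
    {x : ι → α → X} {x₀ : α → X} (hx : TendstoUniformlyOn x x₀ l s)
    {z : ι → α → Z} {z₀ : α → Z} (hz : TendstoUniformlyOn z z₀ l s)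
    {ϑ : ι → Θ} {θ : Θ} (hϑ : Tendsto ϑ l (𝓝 θ)) (hϑS : ∀ᶠ i in l, ϑ i ∈ S) (hθS : θ ∈ S) :
    TendstoUniformlyOn (fun i p => f (t i p) (x i p) (z i p) (ϑ i))
      (fun p => f (t₀ p) (x₀ p) (z₀ p) θ) l s := by
  have htuple := tendstoUniformlyOn_prodMk ht (tendstoUniformlyOn_prodMk hx
    (tendstoUniformlyOn_prodMk hz (hϑ.tendstoUniformlyOn_const s)))
  refine hf.comp_tendstoUniformlyOn_eventually (hϑS.mono fun i hi p hp => ?_) (fun p hp => ?_)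
    htuple
  · exact ⟨htI i hp, mem_univ _, mem_univ _, hi⟩
  · exact ⟨ht₀I hp, mem_univ _, mem_univ _, hθS⟩

variable {E : Type*} [NormedAddCommGroup E] {a b : ℝ} {ι : Type*} {l : Filter ι} {N : ι → ℕ}
  {τ : ι → ℕ → ℝ}

lemma tendstoUniformlyOn_leftNode (hP : ∀ i, IsPartition a b (N i) (τ i))
    (hmesh : Tendsto (fun i => mesh (N i) (τ i)) l (𝓝 0)) :
    TendstoUniformlyOn (fun i => leftNode (N i) (τ i)) id l (Ioc a b) := by
  rw [Metric.tendstoUniformlyOn_iff]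
  intro ε hε
  filter_upwards [hmesh.eventually_lt_const hε] with i hi t ht
  rw [dist_comm]
  have hcell := (hP i).mem_cell_cellIndex ht
  exact ((hP i).dist_le_mesh ht (left_mem_Icc.2 (hcell.1.le.trans hcell.2))).trans_lt hi

lemma tendstoUniformlyOn_comp_leftNode (hP : ∀ i, IsPartition a b (N i) (τ i))
    (hmesh : Tendsto (fun i => mesh (N i) (τ i)) l (𝓝 0)) {y : ι → ℝ → E} {y₀ : ℝ → E}
    (hy : TendstoUniformlyOn y y₀ l (Icc a b)) (hy₀ : ContinuousOn y₀ (Icc a b)) :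
    TendstoUniformlyOn (fun i t => y i (leftNode (N i) (τ i) t)) y₀ l (Ioc a b) := by
  have huc := isCompact_Icc.uniformContinuousOn_of_continuous hy₀
  have hlim := huc.comp_tendstoUniformlyOn_eventually
    (Eventually.of_forall fun i t ht => (hP i).leftNode_mem_Icc ht)
    (fun t ht => Ioc_subset_Icc_self ht) (tendstoUniformlyOn_leftNode hP hmesh)
  rw [Metric.tendstoUniformlyOn_iff] at hy hlim ⊢
  intro ε hε
  filter_upwards [hy (ε / 2) (half_pos hε), hlim (ε / 2) (half_pos hε)] with i hyi hlimi t ht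
  calc dist (y₀ t) (y i (leftNode (N i) (τ i) t))
      ≤ dist (y₀ t) (y₀ (leftNode (N i) (τ i) t)) +
          dist (y₀ (leftNode (N i) (τ i) t)) (y i (leftNode (N i) (τ i) t)) := dist_triangle _ _ _
    _ < ε := by linarith [hlimi t ht, hyi _ ((hP i).leftNode_mem_Icc ht)]

variable [NormedSpace ℝ E]

lemma IsPrimitiveOn.dist_le_of_eulerScheme {N : ℕ} {τ : ℕ → ℝ} (P : IsPartition a b N τ)
    {H H₀ : ℝ → E → E} {z z₀ : ℝ → E} (hz : IsPrimitiveOn a b z fun t => H t (z (leftNode N τ t)))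
    (hz₀ : IsPrimitiveOn a b z₀ fun t => H₀ t (z₀ t)) {K : ℝ≥0}
    (hLip : ∀ t ∈ Ioc a b, LipschitzWith K (H₀ t)) {η : ℝ} (hη : 0 ≤ η)
    (hH : ∀ t ∈ Ioc a b, ∀ c, dist (H t c) (H₀ t c) ≤ η)
    (hosc : ∀ t ∈ Ioc a b, dist (z₀ (leftNode N τ t)) (z₀ t) ≤ η) {t : ℝ} (ht : t ∈ Icc a b) :
    dist (z t) (z₀ t) ≤ (dist (z a) (z₀ a) + (1 + K) * η * (b - a)) * Real.exp (K * (b - a)) := by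
  have hdefect : ∀ s ∈ Ioc a b, ‖H s (z (leftNode N τ s)) - H₀ s (z₀ s)‖ ≤
      K * ‖(z - z₀) (leftNode N τ s)‖ + (1 + K) * η := by
    intro s hs
    set r := leftNode N τ s
    calc ‖H s (z r) - H₀ s (z₀ s)‖
        = dist (H s (z r)) (H₀ s (z₀ s)) := (dist_eq_norm_sub _ _).symm
      _ ≤ dist (H s (z r)) (H₀ s (z r)) + dist (H₀ s (z r)) (H₀ s (z₀ r)) +
            dist (H₀ s (z₀ r)) (H₀ s (z₀ s)) := dist_triangle4 _ _ _ _
      _ ≤ η + K * dist (z r) (z₀ r) + K * η :=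
          add_le_add_three (hH s hs _) ((hLip s hs).dist_le_mul _ _)
            ((hLip s hs).dist_le_mul_of_le (hosc s hs))
      _ = K * ‖(z - z₀) r‖ + (1 + K) * η := by
          rw [dist_eq_norm_sub, Pi.sub_apply]
          ring
  have hta : 0 ≤ t - a := sub_nonneg.2 ht.1
  have htb : t - a ≤ b - a := sub_le_sub_right ht.2 a
  rw [dist_eq_norm_sub, dist_eq_norm_sub]
  refine ((hz.sub hz₀).norm_le_gronwall_of_leftNode P K.coe_nonneg (by positivity) hdefect t
    ht).trans ?_
  have hba : 0 ≤ b - a := hta.trans htb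
  gcongr
  exact le_rfl

lemma tendstoUniformlyOn_of_eulerScheme (hP : ∀ i, IsPartition a b (N i) (τ i))
    (hmesh : Tendsto (fun i => mesh (N i) (τ i)) l (𝓝 0)) {H : ι → ℝ → E → E} {H₀ : ℝ → E → E}
    (hH : TendstoUniformlyOn (fun i => ↿(H i)) ↿H₀ l (Ioc a b ×ˢ univ)) {K : ℝ≥0}
    (hLip : ∀ t ∈ Ioc a b, LipschitzWith K (H₀ t)) {z : ι → ℝ → E} {z₀ : ℝ → E}
    (hz : ∀ᶠ i in l, IsPrimitiveOn a b (z i) fun t => H i t (z i (leftNode (N i) (τ i) t)))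
    (hz₀ : IsPrimitiveOn a b z₀ fun t => H₀ t (z₀ t))
    (hinit : Tendsto (fun i => z i a) l (𝓝 (z₀ a))) :
    TendstoUniformlyOn z z₀ l (Icc a b) := by
  rw [Metric.tendstoUniformlyOn_iff]
  intro ε hε
  have hbound : Tendsto (fun η => (η + (1 + K) * η * (b - a)) * Real.exp (K * (b - a))) (𝓝[>] 0)
      (𝓝 0) :=
    tendsto_nhdsWithin_of_tendsto_nhds (Continuous.tendsto' (by fun_prop) _ _ (by simp))
  obtain ⟨η, hηε, hη⟩ := ((hbound.eventually_lt_const hε).and self_mem_nhdsWithin).exists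
  have hosc := tendstoUniformlyOn_comp_leftNode hP hmesh
    (tendstoUniformlyOn_const_family l (Icc a b) z₀) hz₀.continuousOn
  filter_upwards [hz, Metric.tendstoUniformlyOn_iff.1 hH η hη, Metric.tendsto_nhds.1 hinit η hη,
    Metric.tendstoUniformlyOn_iff.1 hosc η hη] with i hzi hHi hai hosci t ht
  rw [dist_comm]
  refine (hzi.dist_le_of_eulerScheme (hP i) hz₀ hLip hη.le
    (fun s hs c => (dist_comm _ _).trans_le (hHi (s, c) ⟨hs, mem_univ c⟩).le)
    (fun s hs => (dist_comm _ _).trans_le (hosci s hs).le) ht).trans_lt (hηε.trans_le' ?_)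
  gcongr

end UniformConvergence

section SquareIntegrable

variable {α : Type*} {_ : MeasurableSpace α} {μ : Measure α} {E F : Type*} [NormedAddCommGroup E]
  [NormedAddCommGroup F] {ι : Type*} {l : Filter ι} {w : ι → α → E} {u : α → E}

lemma integral_norm_sq_eq_toReal_eLpNorm_sq (hu : MemLp u 2 μ) :
    ∫ x, ‖u x‖ ^ 2 ∂μ = (eLpNorm u 2 μ).toReal ^ 2 := by
  have hint : 0 ≤ ∫ x, ‖u x‖ ^ 2 ∂μ := integral_nonneg fun _ => by positivity
  rw [hu.eLpNorm_eq_integral_rpow_norm two_ne_zero ENNReal.ofNat_ne_top,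
    ENNReal.toReal_ofReal (by positivity)]
  simp only [ENNReal.toReal_ofNat, Real.rpow_ofNat]
  exact (Real.rpow_inv_natCast_pow hint two_ne_zero).symm

lemma tendsto_integral_norm_sq (hw : ∀ i, MemLp (w i) 2 μ) (hu : MemLp u 2 μ)
    (hwu : Tendsto (fun i => eLpNorm (w i - u) 2 μ) l (𝓝 0)) :
    Tendsto (fun i => ∫ x, ‖w i x‖ ^ 2 ∂μ) l (𝓝 (∫ x, ‖u x‖ ^ 2 ∂μ)) := by
  simp only [integral_norm_sq_eq_toReal_eLpNorm_sq, hw, hu, ← Lp.norm_toLp]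
  exact ((Lp.tendsto_Lp_iff_tendsto_eLpNorm'' w hw u hu).2 hwu).norm.pow 2

lemma tendsto_eLpNorm_sub_sub_sub {p : ℝ≥0∞} (hp : 1 ≤ p) {v : ι → α → E} {y : α → E}
    (hw : ∀ i, AEStronglyMeasurable (w i) μ) (hu : AEStronglyMeasurable u μ)
    (hv : ∀ i, AEStronglyMeasurable (v i) μ) (hy : AEStronglyMeasurable y μ)
    (hwu : Tendsto (fun i => eLpNorm (w i - u) p μ) l (𝓝 0))
    (hvy : Tendsto (fun i => eLpNorm (v i - y) p μ) l (𝓝 0)) :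
    Tendsto (fun i => eLpNorm (w i - v i - (u - y)) p μ) l (𝓝 0) := by
  refine tendsto_of_tendsto_of_tendsto_of_le_of_le tendsto_const_nhds
    (by simpa only [add_zero] using hwu.add hvy) (fun _ => zero_le) fun i => ?_
  rw [sub_sub_sub_comm]
  exact eLpNorm_sub_le ((hw i).sub hu) ((hv i).sub hy) hp

lemma tendsto_eLpNorm_clm_comp_sub [NormedSpace ℝ E] [NormedSpace ℝ F] (A : E →L[ℝ] F) {p : ℝ≥0∞}
    (hwu : Tendsto (fun i => eLpNorm (w i - u) p μ) l (𝓝 0)) :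
    Tendsto (fun i => eLpNorm ((fun x => A (w i x)) - fun x => A (u x)) p μ) l (𝓝 0) := by
  have hmul : Tendsto (fun i => ENNReal.ofReal ‖A‖ * eLpNorm (w i - u) p μ) l (𝓝 0) := by
    simpa only [mul_zero] using ENNReal.Tendsto.const_mul hwu (Or.inr ENNReal.ofReal_ne_top)
  refine tendsto_of_tendsto_of_tendsto_of_le_of_le tendsto_const_nhds hmul (fun _ => zero_le)
    fun i => eLpNorm_le_mul_eLpNorm_of_ae_le_mul (ae_of_all _ fun x => ?_) p
  rw [Pi.sub_apply, ← map_sub]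
  exact A.le_opNorm _

lemma tendsto_eLpNorm_one_zero_of_one_le [IsFiniteMeasure μ] {p : ℝ≥0∞} (hp : 1 ≤ p)
    (hw : ∀ i, AEStronglyMeasurable (w i) μ) (hlim : Tendsto (fun i => eLpNorm (w i) p μ) l (𝓝 0)) :
    Tendsto (fun i => eLpNorm (w i) 1 μ) l (𝓝 0) := by
  have hexp : 0 ≤ 1 / (1 : ℝ≥0∞).toReal - 1 / p.toReal := by
    simpa using ENNReal.toReal_mono ENNReal.one_ne_top (ENNReal.inv_le_one.2 hp)
  refine tendsto_of_tendsto_of_tendsto_of_le_of_le tendsto_const_nhds ?_ (fun _ => zero_le)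
    fun i => eLpNorm_le_eLpNorm_mul_rpow_measure_univ hp (hw i)
  simpa only [zero_mul] using ENNReal.Tendsto.mul_const hlim
    (Or.inr (ENNReal.rpow_ne_top_of_nonneg hexp (measure_ne_top μ univ)))

lemma memLp_restrict_Ioc_of_continuousOn {a b : ℝ} {y : ℝ → E} (hy : ContinuousOn y (Icc a b))
    (p : ℝ≥0∞) : MemLp y p (volume.restrict (Ioc a b)) := by
  obtain ⟨C, hC⟩ := isCompact_Icc.exists_bound_of_continuousOn hy
  have hyIoc := hy.mono Ioc_subset_Icc_self
  exact MemLp.of_bound (hyIoc.aestronglyMeasurable measurableSet_Ioc) C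
    ((ae_restrict_mem measurableSet_Ioc).mono fun t ht => hC t (Ioc_subset_Icc_self ht))

lemma tendstoUniformlyOn_of_tendsto_eLpNorm_deriv [NormedSpace ℝ E] {a b : ℝ}
    {x x' : ι → ℝ → E} {x₀ x₀' : ℝ → E} (hx : ∀ i, IsPrimitiveOn a b (x i) (x' i))
    (hx₀ : IsPrimitiveOn a b x₀ x₀') (hinit : Tendsto (fun i => x i a) l (𝓝 (x₀ a)))
    {p : ℝ≥0∞} (hp : 1 ≤ p)
    (hderiv : Tendsto (fun i => eLpNorm (x' i - x₀') p (volume.restrict (Ioc a b))) l (𝓝 0)) :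
    TendstoUniformlyOn x x₀ l (Icc a b) := by
  set μ := volume.restrict (Ioc a b)
  have hint (i) : Integrable (x' i - x₀') μ := (hx i).integrableOn.sub hx₀.integrableOn
  have hderiv₁ := tendsto_eLpNorm_one_zero_of_one_le hp (fun i => (hint i).1) hderiv
  have hbound : Tendsto (fun i => ‖x i a - x₀ a‖ + ∫ s, ‖(x' i - x₀') s‖ ∂μ) l (𝓝 0) := by
    simp only [integral_norm_eq_lintegral_enorm (hint _).1, ← eLpNorm_one_eq_lintegral_enorm]
    simpa only [add_zero] using (tendsto_iff_norm_sub_tendsto_zero.1 hinit).add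
      ((ENNReal.tendsto_toReal_zero_iff fun i =>
        (memLp_one_iff_integrable.2 (hint i)).eLpNorm_ne_top).2 hderiv₁)
  rw [Metric.tendstoUniformlyOn_iff]
  intro ε hε
  filter_upwards [hbound.eventually_lt_const hε] with i hi t ht
  rw [dist_comm, dist_eq_norm_sub]
  exact (((hx i).sub hx₀).norm_le_add_integral_norm ht).trans_lt hi

end SquareIntegrable

section W2

variable {n : ℕ} {tf : ℝ} {x x' : ℝ → Eu n}

lemma isW2_iff :
    IsW2 tf x x' ↔ IsPrimitiveOn 0 tf x x' ∧ MemLp x' 2 (volume.restrict (Ioc 0 tf)) := by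
  rw [IsW2, integrableOn_Icc_iff_integrableOn_Ioc, integrableOn_Icc_iff_integrableOn_Ioc]
  constructor
  · rintro ⟨hint, hsq, hprim⟩
    exact ⟨⟨hint, hprim⟩, (memLp_two_iff_integrable_sq_norm hint.1).2 hsq⟩
  · rintro ⟨hprim, hmem⟩
    exact ⟨hprim.integrableOn, (memLp_two_iff_integrable_sq_norm hmem.1).1 hmem,
      hprim.eq_add_integral⟩

variable {ι : Type*} {l : Filter ι} {xi x'i : ι → ℝ → Eu n}

lemma tendsto_W2dist_zero_iff (hxi : ∀ i, MemLp (x'i i) 2 (volume.restrict (Ioc 0 tf)))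
    (hx : MemLp x' 2 (volume.restrict (Ioc 0 tf))) :
    Tendsto (fun i => W2dist tf (xi i) (x'i i) x x') l (𝓝 0) ↔
      Tendsto (fun i => xi i 0) l (𝓝 (x 0)) ∧
        Tendsto (fun i => eLpNorm (x'i i - x') 2 (volume.restrict (Ioc 0 tf))) l (𝓝 0) := by
  set D := fun i => eLpNorm (x'i i - x') 2 (volume.restrict (Ioc 0 tf))
  have hW2 (i) : W2dist tf (xi i) (x'i i) x x' = √(‖xi i 0 - x 0‖ ^ 2 + (D i).toReal ^ 2) := by
    rw [W2dist, ← integral_norm_sq_eq_toReal_eLpNorm_sq ((hxi i).sub hx)]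
    rfl
  have hD (i) : D i ≠ ∞ := ((hxi i).sub hx).eLpNorm_ne_top
  simp only [hW2]
  rw [tendsto_iff_norm_sub_tendsto_zero (f := fun i => xi i 0),
    ← ENNReal.tendsto_toReal_zero_iff hD]
  constructor
  · refine fun hlim => ⟨squeeze_zero (fun _ => norm_nonneg _) (fun i => ?_) hlim,
      squeeze_zero (fun _ => ENNReal.toReal_nonneg) (fun i => ?_) hlim⟩
    · exact Real.le_sqrt_of_sq_le (le_add_of_nonneg_right (sq_nonneg _))
    · exact Real.le_sqrt_of_sq_le (le_add_of_nonneg_left (sq_nonneg _))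
  · rintro ⟨hinit, hderiv⟩
    simpa using ((hinit.pow 2).add (hderiv.pow 2)).sqrt

end W2

section EulerScheme

variable {n q m : ℕ} {tf : ℝ} {S : Set (Eu m)} {f : ℝ → Eu n → Eu q → Eu m → Eu n}
  {h : ℝ → Eu n → Eu q → Eu m → Eu q}

lemma IsEulerPath.isPrimitiveOn {N : ℕ} {τ : ℕ → ℝ} (P : IsPartition 0 tf N τ) {xt : ℝ → Eu n}
    {ζ : Eu q} {ϑ : Eu m} {zt : ℝ → Eu q} (hzt : IsEulerPath N τ h xt ζ ϑ zt) :
    IsPrimitiveOn 0 tf zt fun t =>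
      h (leftNode N τ t) (xt (leftNode N τ t)) (zt (leftNode N τ t)) ϑ :=
  P.isPrimitiveOn_of_affine (F := fun k => h (τ k) (xt (τ k)) (zt (τ k)) ϑ) hzt.2

lemma IsPartition.eulerSum_eq_integral {N : ℕ} {τ : ℕ → ℝ} (P : IsPartition 0 tf N τ)
    {x x' : ℝ → Eu n} (hx : IsPrimitiveOn 0 tf x x') (f : ℝ → Eu n → Eu q → Eu m → Eu n)
    (A : Eu n → Eu n) (z : ℝ → Eu q) (ϑ : Eu m) :
    eulerSum N τ f A x z ϑ = ∫ t in Ioc 0 tf, ‖A (cellAverage N τ x' t -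
      f (leftNode N τ t) (x (leftNode N τ t)) (z (leftNode N τ t)) ϑ)‖ ^ 2 := by
  refine Eq.trans (Finset.sum_congr rfl fun k hk => ?_) (P.integral_comp_cellIndex fun k =>
    ‖A ((⨍ s in Ioc (τ k) (τ (k + 1)), x' s) - f (τ k) (x (τ k)) (z (τ k)) ϑ)‖ ^ 2).symm
  have hk : k < N := Finset.mem_range.1 hk
  rw [← hx.slope_eq_setAverage (P.node_mem_Icc hk.le).1 (P.lt_succ k hk).le
    (P.node_mem_Icc (Nat.succ_le_of_lt hk)).2]
  rfl

lemma continuousOn_vectorField {V : Type*} [UniformSpace V] {f : ℝ → Eu n → Eu q → Eu m → V}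
    (hf : UniformContinuousOn ↿f (Icc 0 tf ×ˢ univ ×ˢ univ ×ˢ S)) {x : ℝ → Eu n} {z : ℝ → Eu q}
    (hx : ContinuousOn x (Icc 0 tf)) (hz : ContinuousOn z (Icc 0 tf)) {θ : Eu m} (hθ : θ ∈ S) :
    ContinuousOn (fun t => f t (x t) (z t) θ) (Icc 0 tf) :=
  hf.continuousOn.comp (continuousOn_id.prodMk (hx.prodMk (hz.prodMk continuousOn_const)))
    fun _ ht => ⟨ht, mem_univ _, mem_univ _, hθ⟩

variable {ι : Type*} {l : Filter ι} {N : ι → ℕ} {τ : ι → ℕ → ℝ} {xi x'i : ι → ℝ → Eu n}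
  {zt : ι → ℝ → Eu q} {ϑi : ι → Eu m} {x x' : ℝ → Eu n} {z : ℝ → Eu q} {θ : Eu m}

lemma tendstoUniformlyOn_of_isEulerPath (hP : ∀ i, IsPartition 0 tf (N i) (τ i))
    (hmesh : Tendsto (fun i => mesh (N i) (τ i)) l (𝓝 0))
    (hh : UniformContinuousOn ↿h (Icc 0 tf ×ˢ univ ×ˢ univ ×ˢ S))
    {K : ℝ≥0} (hLip : ∀ t ∈ Icc 0 tf, ∀ a, LipschitzWith K fun b => h t a b θ)
    (hxi : TendstoUniformlyOn xi x l (Icc 0 tf)) (hx : ContinuousOn x (Icc 0 tf))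
    (hϑ : Tendsto ϑi l (𝓝 θ)) (hϑS : ∀ᶠ i in l, ϑi i ∈ S) (hθ : θ ∈ S)
    {ζi : ι → Eu q} (hζ : Tendsto ζi l (𝓝 (z 0)))
    (hzt : ∀ᶠ i in l, IsEulerPath (N i) (τ i) h (xi i) (ζi i) (ϑi i) (zt i))
    (hz : IsPrimitiveOn 0 tf z fun t => h t (x t) (z t) θ) :
    TendstoUniformlyOn zt z l (Icc 0 tf) := by
  have hfst : Ioc 0 tf ×ˢ (univ : Set (Eu q)) = Prod.fst ⁻¹' Ioc 0 tf := prod_univ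
  refine tendstoUniformlyOn_of_eulerScheme hP hmesh
    (H := fun i t b => h (leftNode (N i) (τ i) t) (xi i (leftNode (N i) (τ i) t)) b (ϑi i))
    (H₀ := fun t b => h t (x t) b θ) ?_ (fun t ht => hLip t (Ioc_subset_Icc_self ht) _)
    (hzt.mono fun i hi => hi.isPrimitiveOn (hP i)) hz
    (hζ.congr' (hzt.mono fun i hi => hi.1.symm))
  rw [hfst]
  exact tendstoUniformlyOn_comp₄ hh ((tendstoUniformlyOn_leftNode hP hmesh).comp Prod.fst)
    (fun i p hp => (hP i).leftNode_mem_Icc hp) (fun p hp => Ioc_subset_Icc_self hp)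
    ((tendstoUniformlyOn_comp_leftNode hP hmesh hxi hx).comp Prod.fst)
    (tendstoUniformlyOn_const_family l _ Prod.snd) hϑ hϑS hθ

lemma tendsto_eulerSum (hP : ∀ i, IsPartition 0 tf (N i) (τ i))
    (hmesh : Tendsto (fun i => mesh (N i) (τ i)) l (𝓝 0))
    (hf : UniformContinuousOn ↿f (Icc 0 tf ×ˢ univ ×ˢ univ ×ˢ S)) (A : Eu n →L[ℝ] Eu n)
    (hxi : ∀ i, IsW2 tf (xi i) (x'i i)) (hx : IsW2 tf x x')
    (hxiu : TendstoUniformlyOn xi x l (Icc 0 tf))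
    (hx'i : Tendsto (fun i => eLpNorm (x'i i - x') 2 (volume.restrict (Ioc 0 tf))) l (𝓝 0))
    (hϑ : Tendsto ϑi l (𝓝 θ)) (hϑS : ∀ᶠ i in l, ϑi i ∈ S) (hθ : θ ∈ S)
    (hzt : TendstoUniformlyOn zt z l (Icc 0 tf)) (hz : ContinuousOn z (Icc 0 tf)) :
    Tendsto (fun i => eulerSum (N i) (τ i) f A (xi i) (zt i) (ϑi i)) l
      (𝓝 (∫ t in Ioc 0 tf, ‖A (x' t - f t (x t) (z t) θ)‖ ^ 2)) := by
  set μ := volume.restrict (Ioc 0 tf)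
  obtain ⟨hxprim, hx'⟩ := isW2_iff.1 hx
  set drift := fun i t => f (leftNode (N i) (τ i) t) (xi i (leftNode (N i) (τ i) t))
    (zt i (leftNode (N i) (τ i) t)) (ϑi i)
  set drift₀ := fun t => f t (x t) (z t) θ
  have hdrift : TendstoUniformlyOn drift drift₀ l (Ioc 0 tf) :=
    tendstoUniformlyOn_comp₄ hf (tendstoUniformlyOn_leftNode hP hmesh)
      (fun i t ht => (hP i).leftNode_mem_Icc ht) (fun t ht => Ioc_subset_Icc_self ht)
      (tendstoUniformlyOn_comp_leftNode hP hmesh hxiu hxprim.continuousOn)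
      (tendstoUniformlyOn_comp_leftNode hP hmesh hzt hz) hϑ hϑS hθ
  have hdriftLp (i) : MemLp (drift i) 2 μ := memLp_comp_cellIndex (N i) (τ i)
    (fun k => f (τ i k) (xi i (τ i k)) (zt i (τ i k)) (ϑi i)) 2 μ
  have hdrift₀Lp : MemLp drift₀ 2 μ :=
    memLp_restrict_Ioc_of_continuousOn (continuousOn_vectorField hf hxprim.continuousOn hz hθ) 2
  have hslope := tendsto_eLpNorm_cellAverage_sub_of_tendsto hP hmesh one_le_two
    ENNReal.ofNat_ne_top (fun i => (isW2_iff.1 (hxi i)).2) hx' hx'i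
  have hslopeLp (i) : MemLp (cellAverage (N i) (τ i) (x'i i)) 2 μ := memLp_cellAverage _ _ _ _ _
  have hresidual := tendsto_eLpNorm_sub_sub_sub one_le_two (fun i => (hslopeLp i).1) hx'.1
    (fun i => (hdriftLp i).1) hdrift₀Lp.1 hslope
    (tendsto_eLpNorm_sub_of_tendstoUniformlyOn measurableSet_Ioc (by simp) hdrift 2)
  simp only [(hP _).eulerSum_eq_integral (isW2_iff.1 (hxi _)).1]
  exact tendsto_integral_norm_sq (fun i => A.comp_memLp' ((hslopeLp i).sub (hdriftLp i)))
    (A.comp_memLp' (hx'.sub hdrift₀Lp)) (tendsto_eLpNorm_clm_comp_sub A hresidual)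

end EulerScheme

section LogPosterior

lemma elog_eq_log_ofReal (r : ℝ) : elog r = ENNReal.log (ENNReal.ofReal r) :=
  (ENNReal.log_ofReal r).symm

lemma continuous_elog : Continuous elog := by
  simp only [funext elog_eq_log_ofReal]
  exact ENNReal.continuous_log.comp ENNReal.continuous_ofReal

lemma elog_ne_top (r : ℝ) : elog r ≠ ⊤ := by
  rw [elog_eq_log_ofReal]
  exact fun hr => ENNReal.ofReal_ne_top (ENNReal.log_eq_top_iff.1 hr)

lemma continuous_elog_add_elog_sub :
    Continuous fun p : ℝ × ℝ × ℝ => elog p.1 + elog p.2.1 - ((p.2.2 : ℝ) : EReal) := by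
  have helog : Continuous fun p : ℝ × ℝ × ℝ => elog p.1 + elog p.2.1 :=
    continuous_iff_continuousAt.2 fun p =>
      (EReal.continuousAt_add (Or.inl (elog_ne_top p.1)) (Or.inr (elog_ne_top p.2.1))).comp₂
        (continuous_elog.comp continuous_fst).continuousAt
        (continuous_elog.comp (continuous_fst.comp continuous_snd)).continuousAt
  have hneg : Continuous fun p : ℝ × ℝ × ℝ => -((p.2.2 : ℝ) : EReal) :=
    (continuous_coe_real_ereal.comp (continuous_snd.comp continuous_snd)).neg
  exact continuous_iff_continuousAt.2 fun p =>
    (EReal.continuousAt_add (Or.inr (by simp [← EReal.coe_neg]))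
      (Or.inr (by simp [← EReal.coe_neg]))).comp₂ helog.continuousAt hneg.continuousAt

variable {X Z Θ : Type*} [NormedAddCommGroup X] [NormedAddCommGroup Z] [NormedAddCommGroup Θ]

/-- `ψ` is a likelihood of continuous paths on `[0, t_f]` and parameters: nonnegative, and
continuous for the supremum norms. Paths are functions on `ℝ`, so that only their restrictions to
`[0, t_f]` matter for continuity. -/
structure IsPathLikelihood (tf : ℝ) (ψ : (ℝ → X) → (ℝ → Z) → Θ → ℝ) : Prop where
  nonneg : ∀ a b c, 0 ≤ ψ a b c
  continuous : ∀ (a : ℝ → X) (b : ℝ → Z) (c : Θ), ContinuousOn a (Icc 0 tf) →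
    ContinuousOn b (Icc 0 tf) → ∀ ε > (0 : ℝ), ∃ δ > (0 : ℝ),
    ∀ (a' : ℝ → X) (b' : ℝ → Z) (c' : Θ), ContinuousOn a' (Icc 0 tf) →
      ContinuousOn b' (Icc 0 tf) →
      (∀ t ∈ Icc (0 : ℝ) tf, ‖a' t - a t‖ ≤ δ) →
      (∀ t ∈ Icc (0 : ℝ) tf, ‖b' t - b t‖ ≤ δ) → ‖c' - c‖ ≤ δ →
      |ψ a' b' c' - ψ a b c| ≤ ε

/-- `pr` is a continuous unnormalized prior density of initial states and parameters. -/
structure IsPriorDensity (pr : X → Z → Θ → ℝ) : Prop where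
  nonneg : ∀ a b c, 0 ≤ pr a b c
  continuous : Continuous fun p : X × Z × Θ => pr p.1 p.2.1 p.2.2

lemma IsPathLikelihood.tendsto {tf : ℝ} {ψ : (ℝ → X) → (ℝ → Z) → Θ → ℝ}
    (hψ : IsPathLikelihood tf ψ) {ι : Type*} {l : Filter ι} {xi : ι → ℝ → X} {x : ℝ → X}
    {zi : ι → ℝ → Z} {z : ℝ → Z} {ϑi : ι → Θ} {θ : Θ}
    (hxi : TendstoUniformlyOn xi x l (Icc 0 tf)) (hzi : TendstoUniformlyOn zi z l (Icc 0 tf))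
    (hϑ : Tendsto ϑi l (𝓝 θ)) (hxic : ∀ᶠ i in l, ContinuousOn (xi i) (Icc 0 tf))
    (hzic : ∀ᶠ i in l, ContinuousOn (zi i) (Icc 0 tf)) (hx : ContinuousOn x (Icc 0 tf))
    (hz : ContinuousOn z (Icc 0 tf)) :
    Tendsto (fun i => ψ (xi i) (zi i) (ϑi i)) l (𝓝 (ψ x z θ)) := by
  rw [Metric.tendsto_nhds]
  intro ε hε
  obtain ⟨δ, hδ, hψδ⟩ := hψ.continuous x z θ hx hz (ε / 2) (half_pos hε)
  filter_upwards [hxic, hzic, Metric.tendstoUniformlyOn_iff.1 hxi δ hδ,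
    Metric.tendstoUniformlyOn_iff.1 hzi δ hδ, Metric.tendsto_nhds.1 hϑ δ hδ]
    with i hxic hzic hxi hzi hϑ
  have hle := hψδ _ _ _ hxic hzic (fun t ht => (dist_eq_norm_sub' _ _).symm.trans_le (hxi t ht).le)
    (fun t ht => (dist_eq_norm_sub' _ _).symm.trans_le (hzi t ht).le)
    ((dist_eq_norm_sub _ _).symm.trans_le hϑ.le)
  exact hle.trans_lt (half_lt_self hε)

end LogPosterior

section HypoConvergence

lemma tendsto_add_zero_iff_of_nonneg {ι : Type*} {l : Filter ι} {a b : ι → ℝ} (ha : ∀ i, 0 ≤ a i)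
    (hb : ∀ i, 0 ≤ b i) :
    Tendsto (fun i => a i + b i) l (𝓝 0) ↔ Tendsto a l (𝓝 0) ∧ Tendsto b l (𝓝 0) := by
  constructor
  · exact fun hab => ⟨squeeze_zero ha (fun i => le_add_of_nonneg_right (hb i)) hab,
      squeeze_zero hb (fun i => le_add_of_nonneg_left (ha i)) hab⟩
  · rintro ⟨ha, hb⟩
    simpa only [add_zero] using ha.add hb

lemma uniformContinuousOn_of_modulus_add {X Z Θ V W : Type*} [SeminormedAddCommGroup X]
    [SeminormedAddCommGroup Z] [SeminormedAddCommGroup Θ] [SeminormedAddCommGroup V]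
    [SeminormedAddCommGroup W] {I : Set ℝ} {S : Set Θ} {f : ℝ → X → Z → Θ → V}
    {h : ℝ → X → Z → Θ → W} {ρf ρh : ℝ → ℝ}
    (hρ : Tendsto (fun ε => ρf ε + ρh ε) (𝓝[>] 0) (𝓝 0))
    (hfu : ∀ ε > (0 : ℝ), ∀ t ∈ I, ∀ t' ∈ I, ∀ (a a' : X) (b b' : Z) (c c' : Θ), c ∈ S → c' ∈ S →
      |t - t'| ≤ ε → ‖a - a'‖ ≤ ε → ‖b - b'‖ ≤ ε → ‖c - c'‖ ≤ ε →
      ‖f t a b c - f t' a' b' c'‖ ≤ ρf ε)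
    (hhu : ∀ ε > (0 : ℝ), ∀ t ∈ I, ∀ t' ∈ I, ∀ (a a' : X) (b b' : Z) (c c' : Θ), c ∈ S → c' ∈ S →
      |t - t'| ≤ ε → ‖a - a'‖ ≤ ε → ‖b - b'‖ ≤ ε → ‖c - c'‖ ≤ ε →
      ‖h t a b c - h t' a' b' c'‖ ≤ ρh ε) :
    UniformContinuousOn ↿f (I ×ˢ univ ×ˢ univ ×ˢ S) := by
  rw [Metric.uniformContinuousOn_iff]
  intro η hη
  obtain ⟨ε, hεη, hε⟩ := ((hρ.eventually_lt_const hη).and self_mem_nhdsWithin).exists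
  refine ⟨ε, hε, ?_⟩
  rintro ⟨t, a, b, c⟩ ⟨ht, -, -, hc⟩ ⟨t', a', b', c'⟩ ⟨ht', -, -, hc'⟩ hdist
  simp only [Prod.dist_eq, max_lt_iff] at hdist
  simp only [dist_eq_norm_sub, Real.norm_eq_abs] at hdist
  obtain ⟨htt, haa, hbb, hcc⟩ := hdist
  have hfε := hfu ε hε t ht t' ht' a a' b b' c c' hc hc' htt.le haa.le hbb.le hcc.le
  have hhε := hhu ε hε t ht t' ht' a a' b b' c c' hc hc' htt.le haa.le hbb.le hcc.le
  rw [dist_eq_norm_sub]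
  exact (hfε.trans (le_add_of_nonneg_right ((norm_nonneg _).trans hhε))).trans_lt hεη

variable {n q m : ℕ} {tf : ℝ} {S : Set (Eu m)} {f : ℝ → Eu n → Eu q → Eu m → Eu n}
  {h : ℝ → Eu n → Eu q → Eu m → Eu q} {ψ : (ℝ → Eu n) → (ℝ → Eu q) → Eu m → ℝ}
  {pr : Eu n → Eu q → Eu m → ℝ} {A : Eu n →L[ℝ] Eu n} {ι : Type*} {l : Filter ι} {N : ι → ℕ}
  {τ : ι → ℕ → ℝ} {xi x'i : ι → ℝ → Eu n} {ζi : ι → Eu q} {ϑi : ι → Eu m} {x x' : ℝ → Eu n}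
  {z₀ : Eu q} {θ : Eu m} {L : ι → EReal} {Lv : EReal}

lemma tendsto_W2dist_add_norm_add_norm_zero_iff (hxi : ∀ i, IsW2 tf (xi i) (x'i i))
    (hx : IsW2 tf x x') :
    Tendsto (fun i => W2dist tf (xi i) (x'i i) x x' + ‖ζi i - z₀‖ + ‖ϑi i - θ‖) l (𝓝 0) ↔
      (Tendsto (fun i => xi i 0) l (𝓝 (x 0)) ∧
        Tendsto (fun i => eLpNorm (x'i i - x') 2 (volume.restrict (Ioc 0 tf))) l (𝓝 0)) ∧
        Tendsto ζi l (𝓝 z₀) ∧ Tendsto ϑi l (𝓝 θ) := by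
  have hW2 (i) : 0 ≤ W2dist tf (xi i) (x'i i) x x' := Real.sqrt_nonneg _
  rw [tendsto_add_zero_iff_of_nonneg (fun i => add_nonneg (hW2 i) (norm_nonneg _))
    (fun _ => norm_nonneg _), tendsto_add_zero_iff_of_nonneg hW2 (fun _ => norm_nonneg _),
    tendsto_W2dist_zero_iff (fun i => (isW2_iff.1 (hxi i)).2) (isW2_iff.1 hx).2, and_assoc,
    ← tendsto_iff_norm_sub_tendsto_zero, ← tendsto_iff_norm_sub_tendsto_zero]

/-- The standing assumptions on the data of the estimation problem: the drift `f` of the noisy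
state, the vector field `h` of the clean state, the likelihood `ψ` and the prior `pr`. -/
structure IsRegularModel (tf : ℝ) (S : Set (Eu m)) (f : ℝ → Eu n → Eu q → Eu m → Eu n)
    (h : ℝ → Eu n → Eu q → Eu m → Eu q) (ψ : (ℝ → Eu n) → (ℝ → Eu q) → Eu m → ℝ)
    (pr : Eu n → Eu q → Eu m → ℝ) : Prop where
  uniformContinuousOn_noisy : UniformContinuousOn ↿f (Icc 0 tf ×ˢ univ ×ˢ univ ×ˢ S)
  uniformContinuousOn_clean : UniformContinuousOn ↿h (Icc 0 tf ×ˢ univ ×ˢ univ ×ˢ S)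
  exists_lipschitzWith_clean : ∀ θ ∈ S, ∃ K : ℝ≥0, ∀ t ∈ Icc 0 tf, ∀ a,
    LipschitzWith K fun b => h t a b θ
  likelihood : IsPathLikelihood tf ψ
  prior : IsPriorDensity pr

lemma tendsto_eulerVal (hM : IsRegularModel tf S f h ψ pr)
    (hP : ∀ i, IsPartition 0 tf (N i) (τ i)) (hmesh : Tendsto (fun i => mesh (N i) (τ i)) l (𝓝 0))
    (hxi : ∀ i, IsW2 tf (xi i) (x'i i)) (hx : IsW2 tf x x')
    (hlim : Tendsto (fun i => W2dist tf (xi i) (x'i i) x x' + ‖ζi i - z₀‖ + ‖ϑi i - θ‖) l (𝓝 0))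
    (hgood : ∀ᶠ i in l, IsPL tf (N i) (τ i) (xi i) ∧ ϑi i ∈ S) (hθ : θ ∈ S)
    (hL : ∀ i, EulerVal tf (N i) (τ i) S f h ψ pr A (xi i) (ζi i) (ϑi i) (L i))
    (hLv : EnergyVal tf S f h ψ pr A x x' z₀ θ Lv) : Tendsto L l (𝓝 Lv) := by
  obtain rfl | hl := l.eq_or_neBot
  · exact tendsto_bot
  obtain ⟨i₀⟩ := hl.nonempty
  obtain ⟨⟨hx₀, hx'⟩, hζ, hϑ⟩ := (tendsto_W2dist_add_norm_add_norm_zero_iff hxi hx).1 hlim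
  have hϑS : ∀ᶠ i in l, ϑi i ∈ S := hgood.mono fun _ => And.right
  have hxprim := (isW2_iff.1 hx).1
  have hxiprim (i) := (isW2_iff.1 (hxi i)).1
  have hxu : TendstoUniformlyOn xi x l (Icc 0 tf) :=
    tendstoUniformlyOn_of_tendsto_eLpNorm_deriv hxiprim hxprim hx₀ one_le_two hx'
  obtain ⟨K, hK⟩ := hM.exists_lipschitzWith_clean θ hθ
  obtain ⟨z, hzc, hz, rfl⟩ := hLv.2 hθ
  obtain ⟨rfl, hzprim⟩ := isPrimitiveOn_of_eq_add_integral
    ((continuousOn_vectorField hM.uniformContinuousOn_clean hxprim.continuousOn hzc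
      hθ).integrableOn_Icc.mono_set Ioc_subset_Icc_self) (hP i₀).left_le_right hz
  choose! zt hzt using fun i => (hL i).2
  have hEuler : ∀ᶠ i in l, IsEulerPath (N i) (τ i) h (xi i) (ζi i) (ϑi i) (zt i) :=
    hgood.mono fun i hi => (hzt i hi).1
  have hzu : TendstoUniformlyOn zt z l (Icc 0 tf) :=
    tendstoUniformlyOn_of_isEulerPath hP hmesh hM.uniformContinuousOn_clean hK hxu
      hxprim.continuousOn hϑ hϑS hθ hζ hEuler hzprim
  have hψ := hM.likelihood.tendsto hxu hzu hϑ
    (Eventually.of_forall fun i => (hxiprim i).continuousOn)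
    (hEuler.mono fun i hi => (hi.isPrimitiveOn (hP i)).continuousOn) hxprim.continuousOn hzc
  have hpr := (hM.prior.continuous.tendsto (x 0, z 0, θ)).comp
    (hx₀.prodMk_nhds (hζ.prodMk_nhds hϑ))
  have hsum := tendsto_eulerSum hP hmesh hM.uniformContinuousOn_noisy A hxi hx hxu hx' hϑ hϑS hθ
    hzu hzc
  refine ((continuous_elog_add_elog_sub.tendsto _).comp
    (hψ.prodMk_nhds (hpr.prodMk_nhds (hsum.const_mul (1 / 2))))).congr' ?_
  exact hgood.mono fun i hi => (hzt i hi).2.symm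

lemma limsup_eulerVal_le (hM : IsRegularModel tf S f h ψ pr) (hS : IsClosed S)
    (hP : ∀ i, IsPartition 0 tf (N i) (τ i)) (hmesh : Tendsto (fun i => mesh (N i) (τ i)) l (𝓝 0))
    (hxi : ∀ i, IsW2 tf (xi i) (x'i i)) (hx : IsW2 tf x x')
    (hlim : Tendsto (fun i => W2dist tf (xi i) (x'i i) x x' + ‖ζi i - z₀‖ + ‖ϑi i - θ‖) l (𝓝 0))
    (hL : ∀ i, EulerVal tf (N i) (τ i) S f h ψ pr A (xi i) (ζi i) (ϑi i) (L i))
    (hLv : EnergyVal tf S f h ψ pr A x x' z₀ θ Lv) : limsup L l ≤ Lv := by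
  by_cases hθ : θ ∈ S
  -- `L` converges to `Lv` along the indices where it is not `-∞` by convention.
  · set good := {i | IsPL tf (N i) (τ i) (xi i) ∧ ϑi i ∈ S}
    have htendsto : Tendsto L (l ⊓ 𝓟 good) (𝓝 Lv) :=
      tendsto_eulerVal hM hP (hmesh.mono_left inf_le_left) hxi hx (hlim.mono_left inf_le_left)
        (mem_inf_of_right (mem_principal_self good)) hθ hL hLv
    refine le_of_forall_gt_imp_ge_of_dense fun c hc => limsup_le_of_le (by isBoundedDefault) ?_
    filter_upwards [eventually_inf_principal.1 (htendsto.eventually_lt_const hc)] with i hi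
    by_cases hgood : i ∈ good
    · exact (hi hgood).le
    · exact ((hL i).1 hgood).trans_le bot_le
  · obtain ⟨-, -, hϑ⟩ := (tendsto_W2dist_add_norm_add_norm_zero_iff hxi hx).1 hlim
    refine limsup_le_of_le (by isBoundedDefault) ?_
    filter_upwards [hϑ.eventually (hS.isOpen_compl.mem_nhds hθ)] with i hi
    exact ((hL i).1 fun hgood => hi hgood.2).trans_le bot_le

/-- The piecewise linear interpolant at the nodes `τ` of a path with initial value `c` and
derivative `y`: its slope on each cell is the average of `y` there. -/
noncomputable def plInterpolant (N : ℕ) (τ : ℕ → ℝ) (c : Eu n) (y : ℝ → Eu n) (t : ℝ) : Eu n :=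
  c + ∫ s in Ioc 0 t, cellAverage N τ y s

lemma isW2_plInterpolant (tf : ℝ) (N : ℕ) (τ : ℕ → ℝ) (c : Eu n) (y : ℝ → Eu n) :
    IsW2 tf (plInterpolant N τ c y) (cellAverage N τ y) :=
  isW2_iff.2 ⟨isPrimitiveOn_add_integral ((memLp_cellAverage N τ y 1 _).integrable le_rfl) c,
    memLp_cellAverage N τ y 2 _⟩

lemma IsPartition.isPL_plInterpolant {N : ℕ} {τ : ℕ → ℝ} (P : IsPartition 0 tf N τ) (c : Eu n)
    (y : ℝ → Eu n) : IsPL tf N τ (plInterpolant N τ c y) := by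
  have hprim := (isW2_iff.1 (isW2_plInterpolant tf N τ c y)).1
  refine ⟨hprim.continuousOn, fun k hk => ?_⟩
  set g := plInterpolant N τ c y
  set v := ⨍ s in Ioc (τ k) (τ (k + 1)), y s
  refine ⟨g (τ k) - τ k • v, v, fun t ht => ?_⟩
  have hsub : g t - g (τ k) = (t - τ k) • v :=
    (hprim.sub_eq_integral (P.node_mem_Icc hk.le).1 ht.1
      (ht.2.trans (P.node_mem_Icc (Nat.succ_le_of_lt hk)).2)).trans
      (P.integral_comp_cellIndex_of_mem_cell (fun k => ⨍ s in Ioc (τ k) (τ (k + 1)), y s) hk ht)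
  rw [← sub_add_cancel (g t) (g (τ k)), hsub, sub_smul]
  abel

lemma tendsto_W2dist_plInterpolant (hP : ∀ i, IsPartition 0 tf (N i) (τ i))
    (hmesh : Tendsto (fun i => mesh (N i) (τ i)) l (𝓝 0)) (hx : IsW2 tf x x') :
    Tendsto (fun i => W2dist tf (plInterpolant (N i) (τ i) (x 0) x') (cellAverage (N i) (τ i) x')
      x x') l (𝓝 0) := by
  have hx' := (isW2_iff.1 hx).2
  refine (tendsto_W2dist_zero_iff (fun i => memLp_cellAverage _ _ _ _ _) hx').2 ⟨?_, ?_⟩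
  · simpa [plInterpolant] using tendsto_const_nhds
  · exact tendsto_eLpNorm_cellAverage_sub hP hmesh one_le_two ENNReal.ofNat_ne_top hx'

lemma le_liminf_eulerVal_plInterpolant (hM : IsRegularModel tf S f h ψ pr)
    (hP : ∀ i, IsPartition 0 tf (N i) (τ i)) (hmesh : Tendsto (fun i => mesh (N i) (τ i)) l (𝓝 0))
    (hx : IsW2 tf x x')
    (hL : ∀ i, EulerVal tf (N i) (τ i) S f h ψ pr A (plInterpolant (N i) (τ i) (x 0) x') z₀ θ (L i))
    (hLv : EnergyVal tf S f h ψ pr A x x' z₀ θ Lv) : Lv ≤ liminf L l := by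
  obtain rfl | _ := l.eq_or_neBot
  · simp
  by_cases hθ : θ ∈ S
  · have htendsto : Tendsto L l (𝓝 Lv) :=
      tendsto_eulerVal hM hP hmesh (fun i => isW2_plInterpolant tf (N i) (τ i) (x 0) x') hx
        (by simpa using tendsto_W2dist_plInterpolant hP hmesh hx)
        (Eventually.of_forall fun i => ⟨(hP i).isPL_plInterpolant (x 0) x', hθ⟩) hθ hL hLv
    exact htendsto.liminf_eq.ge
  · exact (hLv.1 hθ).trans_le bot_le

theorem stmt8_general (hM : IsRegularModel tf S f h ψ pr) (hS : IsClosed S)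
    (A : Eu n →L[ℝ] Eu n) (hP : ∀ i, IsPartition 0 tf (N i) (τ i))
    (hmesh : Tendsto (fun i => mesh (N i) (τ i)) l (𝓝 0)) :
    (∀ (xi x'i : ι → ℝ → Eu n) (ζi : ι → Eu q) (ϑi : ι → Eu m)
      (x x' : ℝ → Eu n) (z₀ : Eu q) (θ : Eu m),
      (∀ i, IsW2 tf (xi i) (x'i i)) → IsW2 tf x x' →
      Tendsto (fun i => W2dist tf (xi i) (x'i i) x x' + ‖ζi i - z₀‖ + ‖ϑi i - θ‖) l (𝓝 0) →
      ∀ (L : ι → EReal) (Lv : EReal),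
        (∀ i, EulerVal tf (N i) (τ i) S f h ψ pr A (xi i) (ζi i) (ϑi i) (L i)) →
        EnergyVal tf S f h ψ pr A x x' z₀ θ Lv → limsup L l ≤ Lv) ∧
    (∀ (x x' : ℝ → Eu n) (z₀ : Eu q) (θ : Eu m), IsW2 tf x x' →
      ∃ (xi x'i : ι → ℝ → Eu n) (ζi : ι → Eu q) (ϑi : ι → Eu m),
        (∀ i, IsW2 tf (xi i) (x'i i)) ∧
        Tendsto (fun i => W2dist tf (xi i) (x'i i) x x' + ‖ζi i - z₀‖ + ‖ϑi i - θ‖) l (𝓝 0) ∧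
        ∀ (L : ι → EReal) (Lv : EReal),
          (∀ i, EulerVal tf (N i) (τ i) S f h ψ pr A (xi i) (ζi i) (ϑi i) (L i)) →
          EnergyVal tf S f h ψ pr A x x' z₀ θ Lv → Lv ≤ liminf L l) := by
  refine ⟨fun _ _ _ _ _ _ _ _ hxi hx hlim _ _ hL hLv =>
    limsup_eulerVal_le hM hS hP hmesh hxi hx hlim hL hLv, fun x x' z₀ θ hx => ?_⟩
  refine ⟨fun i => plInterpolant (N i) (τ i) (x 0) x', fun i => cellAverage (N i) (τ i) x',
    fun _ => z₀, fun _ => θ, fun i => isW2_plInterpolant tf (N i) (τ i) (x 0) x', ?_,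
    fun _ _ hL hLv => le_liminf_eulerVal_plInterpolant hM hP hmesh hx hL hLv⟩
  simpa using tendsto_W2dist_plInterpolant hP hmesh hx

end HypoConvergence

/-- Theorem 3.7: the Euler-discretized joint state-path and parameter
log-posteriors `ℓ̃_i` hypo-converge, on `𝒵 = W²_n × ℝ^q × ℝ^m` with the `W²`-norm
topology on the first factor, to the energy log-posterior `ℓ_e`.  Hypo-convergence
is spelled out sequentially: (a) `limsup ℓ̃_i(ζ_i) ≤ ℓ_e(ζ)` along every convergent
sequence `ζ_i → ζ` in `𝒵`, and (b) every `ζ ∈ 𝒵` is the limit of a sequence with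
`liminf ℓ̃_i(ζ_i) ≥ ℓ_e(ζ)`. -/
theorem stmt8 {n q m : ℕ} (tf : ℝ) (htf : 0 < tf)
    -- nested partitions with vanishing mesh
    (N : ℕ → ℕ) (hN1 : ∀ i, 1 ≤ N i) (tP : ℕ → ℕ → ℝ)
    (htP0 : ∀ i, tP i 0 = 0) (htPN : ∀ i, tP i (N i) = tf)
    (htPmono : ∀ i, ∀ k < N i, tP i k < tP i (k + 1))
    (hnested : ∀ i, ∀ k ≤ N i, ∃ k' ≤ N (i + 1), tP (i + 1) k' = tP i k)
    (hmesh : Tendsto (fun i => ⨆ k : Fin (N i), (tP i (k.1 + 1) - tP i k.1))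
      atTop (nhds 0))
    -- closed parameter set
    (S : Set (Eu m)) (hS : IsClosed S)
    -- dynamics and their regularity
    (f : ℝ → Eu n → Eu q → Eu m → Eu n) (h : ℝ → Eu n → Eu q → Eu m → Eu q)
    (hfc : Continuous fun p : ℝ × Eu n × Eu q × Eu m => f p.1 p.2.1 p.2.2.1 p.2.2.2)
    (hhc : Continuous fun p : ℝ × Eu n × Eu q × Eu m => h p.1 p.2.1 p.2.2.1 p.2.2.2)
    (ρf ρh : ℝ → ℝ)
    (hρ : Tendsto (fun ε => ρf ε + ρh ε) (nhdsWithin 0 (Ioi 0)) (nhds 0))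
    (hfu : ∀ ε > (0:ℝ), ∀ t ∈ Icc (0:ℝ) tf, ∀ t' ∈ Icc (0:ℝ) tf,
      ∀ (a a' : Eu n) (b b' : Eu q) (c c' : Eu m), c ∈ S → c' ∈ S →
      |t - t'| ≤ ε → ‖a - a'‖ ≤ ε → ‖b - b'‖ ≤ ε → ‖c - c'‖ ≤ ε →
      ‖f t a b c - f t' a' b' c'‖ ≤ ρf ε)
    (hhu : ∀ ε > (0:ℝ), ∀ t ∈ Icc (0:ℝ) tf, ∀ t' ∈ Icc (0:ℝ) tf,
      ∀ (a a' : Eu n) (b b' : Eu q) (c c' : Eu m), c ∈ S → c' ∈ S →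
      |t - t'| ≤ ε → ‖a - a'‖ ≤ ε → ‖b - b'‖ ≤ ε → ‖c - c'‖ ≤ ε →
      ‖h t a b c - h t' a' b' c'‖ ≤ ρh ε)
    (Lf Lh : Eu m → ℝ) (hLf : ∀ θ ∈ S, 0 < Lf θ) (hLh : ∀ θ ∈ S, 0 < Lh θ)
    (hfLip : ∀ θ ∈ S, ∀ t ∈ Icc (0:ℝ) tf, ∀ (a a' : Eu n) (b b' : Eu q),
      ‖f t a b θ - f t a' b' θ‖ ≤ Lf θ * (‖a - a'‖ + ‖b - b'‖))
    (hhLip : ∀ θ ∈ S, ∀ t ∈ Icc (0:ℝ) tf, ∀ (a a' : Eu n) (b b' : Eu q),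
      ‖h t a b θ - h t a' b' θ‖ ≤ Lh θ * (‖a - a'‖ + ‖b - b'‖))
    -- measurement likelihood: nonnegative, continuous w.r.t. the supremum norms
    (ψ : (ℝ → Eu n) → (ℝ → Eu q) → Eu m → ℝ)
    (hψ0 : ∀ a b c, 0 ≤ ψ a b c)
    (hψc : ∀ (a : ℝ → Eu n) (b : ℝ → Eu q) (c : Eu m), ContinuousOn a (Icc 0 tf) →
      ContinuousOn b (Icc 0 tf) → ∀ ε > (0:ℝ), ∃ δ > (0:ℝ),
      ∀ (a' : ℝ → Eu n) (b' : ℝ → Eu q) (c' : Eu m), ContinuousOn a' (Icc 0 tf) →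
        ContinuousOn b' (Icc 0 tf) →
        (∀ t ∈ Icc (0:ℝ) tf, ‖a' t - a t‖ ≤ δ) →
        (∀ t ∈ Icc (0:ℝ) tf, ‖b' t - b t‖ ≤ δ) → ‖c' - c‖ ≤ δ →
        |ψ a' b' c' - ψ a b c| ≤ ε)
    -- prior: nonnegative, continuous, vanishing outside `int S`
    (pr : Eu n → Eu q → Eu m → ℝ)
    (hpr0 : ∀ a b c, 0 ≤ pr a b c)
    (hprc : Continuous fun p : Eu n × Eu q × Eu m => pr p.1 p.2.1 p.2.2)
    (hprv : ∀ a b c, c ∉ interior S → pr a b c = 0)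
    -- invertible diffusion matrix
    (G : Eu n ≃L[ℝ] Eu n) :
    -- (a)
    (∀ (xi x'i : ℕ → ℝ → Eu n) (ζi : ℕ → Eu q) (ϑi : ℕ → Eu m)
      (x x' : ℝ → Eu n) (z0 : Eu q) (θ : Eu m),
      (∀ i, IsW2 tf (xi i) (x'i i)) → IsW2 tf x x' →
      Tendsto (fun i => W2dist tf (xi i) (x'i i) x x' + ‖ζi i - z0‖ + ‖ϑi i - θ‖)
        atTop (nhds 0) →
      ∀ (L : ℕ → EReal) (Lv : EReal),
        (∀ i, EulerVal tf (N i) (tP i) S f h ψ pr (fun v => G.symm v)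
          (xi i) (ζi i) (ϑi i) (L i)) →
        EnergyVal tf S f h ψ pr (fun v => G.symm v) x x' z0 θ Lv →
        limsup L atTop ≤ Lv) ∧
    -- (b)
    (∀ (x x' : ℝ → Eu n) (z0 : Eu q) (θ : Eu m), IsW2 tf x x' →
      ∃ (xi x'i : ℕ → ℝ → Eu n) (ζi : ℕ → Eu q) (ϑi : ℕ → Eu m),
        (∀ i, IsW2 tf (xi i) (x'i i)) ∧
        Tendsto (fun i => W2dist tf (xi i) (x'i i) x x' + ‖ζi i - z0‖ + ‖ϑi i - θ‖)
          atTop (nhds 0) ∧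
        ∀ (L : ℕ → EReal) (Lv : EReal),
          (∀ i, EulerVal tf (N i) (tP i) S f h ψ pr (fun v => G.symm v)
            (xi i) (ζi i) (ϑi i) (L i)) →
          EnergyVal tf S f h ψ pr (fun v => G.symm v) x x' z0 θ Lv →
          Lv ≤ liminf L atTop) := by
  have hM : IsRegularModel tf S f h ψ pr :=
    { uniformContinuousOn_noisy := uniformContinuousOn_of_modulus_add hρ hfu hhu
      uniformContinuousOn_clean :=
        uniformContinuousOn_of_modulus_add (by simpa only [add_comm] using hρ) hhu hfu
      exists_lipschitzWith_clean := fun θ hθ => ⟨(Lh θ).toNNReal, fun t ht a =>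
        LipschitzWith.of_dist_le' fun b b' => by
          simpa [dist_eq_norm_sub] using hhLip θ hθ t ht a a b b'⟩
      likelihood := ⟨hψ0, hψc⟩
      prior := ⟨hpr0, hprc⟩ }
  exact stmt8_general hM hS (G.symm : Eu n →L[ℝ] Eu n)
    (fun i => ⟨htP0 i, htPN i, htPmono i⟩) hmesh
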